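/- The Dedekind eta quotient z(τ) = (η(τ)η(6τ)/(η(2τ)η(3τ)))^{12} satisfies z(i/√30) = 161 - 72√5 = ((√5-1)/2)^{12}. -/

import Mathlib

open Complex

/-- The Dedekind eta function `η(τ) = e^{πiτ/12} ∏_{n≥1} (1 - e^{2πinτ})`. -/
noncomputable def dedekindEta (τ : ℂ) : ℂ :=
  Complex.exp (Real.pi * I * τ / 12) *
    ∏' n : ℕ, (1 - Complex.exp (2 * Real.pi * I * ((n : ℂ) + 1) * τ))

/-- The level-6 eta quotient `z(τ)`. -/
noncomputable def zEta (τ : ℂ) : ℂ :=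
  (dedekindEta τ * dedekindEta (6 * τ) / (dedekindEta (2 * τ) * dedekindEta (3 * τ))) ^ 12

/-- partial Euler product -/
noncomputable def eN (Q : ℝ) (N : ℕ) : ℝ := ∏ i ∈ Finset.range N, (1 - Q ^ (i + 1))

lemma eN_succ (Q : ℝ) (N : ℕ) : eN Q (N + 1) = eN Q N * (1 - Q ^ (N + 1)) := by
  simp [eN, Finset.prod_range_succ]

lemma eN_zero (Q : ℝ) : eN Q 0 = 1 := by simp [eN]

/-- the Euler function -/
noncomputable def eF (Q : ℝ) : ℝ := ∏' i : ℕ, (1 - Q ^ (i + 1))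

section
variable {Q : ℝ}

lemma fac_pos (h0 : 0 < Q) (h1 : Q < 1) (n : ℕ) : 0 < 1 - Q ^ (n + 1) := by
  have := pow_lt_one₀ h0.le h1 (n := n + 1) (by omega)
  linarith

lemma eN_pos (h0 : 0 < Q) (h1 : Q < 1) (n : ℕ) : 0 < eN Q n :=
  Finset.prod_pos fun i _ => fac_pos h0 h1 i

lemma eN_anti (h0 : 0 < Q) (h1 : Q < 1) : Antitone (eN Q) := by
  refine antitone_nat_of_succ_le fun n => ?_
  rw [eN_succ]
  have h2 := eN_pos h0 h1 n
  have h3 : 0 < Q ^ (n + 1) := by positivity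
  nlinarith

lemma summ_aux (h0 : 0 < Q) (h1 : Q < 1) : Summable fun n : ℕ => ‖-Q ^ (n + 1)‖ := by
  have := (summable_nat_add_iff 1).mpr (summable_geometric_of_lt_one h0.le h1)
  refine this.congr fun n => ?_
  rw [norm_neg, Real.norm_eq_abs, abs_of_pos (by positivity)]

lemma eN_tendsto (h0 : 0 < Q) (h1 : Q < 1) :
    Filter.Tendsto (eN Q) Filter.atTop (nhds (eF Q)) := by
  have : Multipliable fun n : ℕ => 1 + (-Q ^ (n + 1)) :=
    multipliable_one_add_of_summable (summ_aux h0 h1)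
  have := this.hasProd.tendsto_prod_nat
  simp only [← sub_eq_add_neg] at this
  exact this

lemma eF_pos (h0 : 0 < Q) (h1 : Q < 1) : 0 < eF Q := by
  have hne : ∏' n : ℕ, (1 + (-Q ^ (n + 1))) ≠ 0 :=
    tprod_one_add_ne_zero_of_summable (fun i => by
      have := fac_pos h0 h1 i
      intro h; linarith) (summ_aux h0 h1)
  have h2 : 0 ≤ eF Q := ge_of_tendsto' (eN_tendsto h0 h1) fun n => (eN_pos h0 h1 n).le
  refine lt_of_le_of_ne h2 (Ne.symm ?_)
  simpa [eF, ← sub_eq_add_neg] using hne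

lemma eF_le (h0 : 0 < Q) (h1 : Q < 1) (n : ℕ) : eF Q ≤ eN Q n :=
  (eN_anti h0 h1).le_of_tendsto (eN_tendsto h0 h1) n

lemma eN_le_one (h0 : 0 < Q) (h1 : Q < 1) (n : ℕ) : eN Q n ≤ 1 := by
  simpa [eN_zero] using eN_anti h0 h1 (Nat.zero_le n)
end

/-- Gaussian binomials -/
noncomputable def gb (Q : ℝ) : ℕ → ℕ → ℝ
  | _, 0 => 1
  | 0, _ + 1 => 0
  | M + 1, j + 1 => gb Q M (j + 1) + Q ^ (M - j) * gb Q M j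

lemma gb_zero (Q : ℝ) (M : ℕ) : gb Q M 0 = 1 := by cases M <;> rfl

lemma gb_succ (Q : ℝ) (M j : ℕ) :
    gb Q (M + 1) (j + 1) = gb Q M (j + 1) + Q ^ (M - j) * gb Q M j := rfl

lemma gb_big (Q : ℝ) (M j : ℕ) (h : M < j) : gb Q M j = 0 := by
  induction M generalizing j with
  | zero => cases j with
    | zero => omega
    | succ j => rfl
  | succ M ih => cases j with
    | zero => omega
    | succ j => rw [gb_succ, ih _ (by omega), ih _ (by omega)]; simp

lemma gb_closed (Q : ℝ) (M : ℕ) : ∀ j k : ℕ, j + k = M → gb Q M j * eN Q j * eN Q k = eN Q M := by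
  induction M with
  | zero => intro j k h; obtain ⟨rfl, rfl⟩ : j = 0 ∧ k = 0 := by omega
            simp [gb_zero, eN_zero]
  | succ M ih =>
    intro j k h
    cases j with
    | zero => obtain rfl : k = M + 1 := by omega
              simp [gb_zero, eN_zero]
    | succ j =>
      rw [gb_succ, eN_succ Q M]
      cases k with
      | zero =>
        obtain rfl : j = M := by omega
        have := ih j 0 (by omega)
        rw [gb_big Q j (j+1) (by omega), eN_succ, Nat.sub_self]; linear_combination (1 - Q ^ (j + 1)) * this
      | succ k =>
        have h1 := ih (j+1) k (by omega)
        have h2 := ih j (k+1) (by omega)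
        obtain rfl : M = j + 1 + k := by omega
        have e : j + 1 + k - j = k + 1 := by omega
        rw [e]
        calc _ = (gb Q (j + 1 + k) (j + 1) * eN Q (j+1) * eN Q k) * (1 - Q^(k+1)) +
            Q ^ (k+1) * (gb Q (j + 1 + k) j * eN Q j * eN Q (k+1)) * (1 - Q ^ (j+1)) := by
              rw [eN_succ Q k, eN_succ Q j]; ring
          _ = _ := by rw [h1, h2]; ring

lemma qbinom (Q x : ℝ) (M : ℕ) : ∏ k ∈ Finset.range M, (1 + x * Q ^ k) =
    ∑ j ∈ Finset.range (M + 1), gb Q M j * Q ^ (j.choose 2) * x ^ j := by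
  induction M with
  | zero => simp [gb_zero]
  | succ M ih =>
    rw [Finset.prod_range_succ, ih, Finset.sum_range_succ' _ (M+1)]
    have e1 : ∑ j ∈ Finset.range (M + 1), gb Q M j * Q ^ (j.choose 2) * x ^ j =
      ∑ j ∈ Finset.range (M + 1), gb Q M (j+1) * Q ^ ((j+1).choose 2) * x ^ (j+1) + 1 := by
      have := Finset.sum_range_succ' (fun j => gb Q M j * Q ^ (j.choose 2) * x ^ j) (M+1)
      rw [Finset.sum_range_succ] at this
      rw [gb_big Q M (M+1) (by omega)] at this
      simpa [gb_zero] using this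
    rw [mul_add, mul_one]
    nth_rw 1 [e1]
    have e2 : ∀ j ∈ Finset.range (M+1), gb Q (M+1) (j+1) * Q ^ ((j+1).choose 2) * x ^ (j+1) =
       gb Q M (j+1) * Q ^ ((j+1).choose 2) * x ^ (j+1) +
        (gb Q M j * Q ^ (j.choose 2) * x ^ j) * (x * Q ^ M) := by
      intro j hj
      have hj : j ≤ M := by simpa [Nat.lt_succ_iff] using hj
      rw [gb_succ]
      have : (j+1).choose 2 = j + j.choose 2 := by
        rw [Nat.choose_succ_succ']; simp
      rw [this]
      obtain ⟨k, rfl⟩ := Nat.exists_eq_add_of_le hj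
      rw [Nat.add_sub_cancel_left]
      ring
    rw [Finset.sum_congr rfl e2, Finset.sum_add_distrib, ← Finset.sum_mul]
    simp [gb_zero]; ring

lemma finite_jtp (q z : ℝ) (hq : 0 < q) (hz : z ≠ 0) (N : ℕ) :
    ∏ i ∈ Finset.range N, ((1 + z * q ^ (2 * i + 1)) * (1 + z⁻¹ * q ^ (2 * i + 1))) =
    ∑ j ∈ Finset.range (2 * N + 1), gb (q ^ 2) (2 * N) j *
      (z ^ ((j : ℤ) - N) * q ^ (((j : ℤ) - N) ^ 2)) := by
  have hq' : q ≠ 0 := hq.ne'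
  have hb := qbinom (q ^ 2) (z * q ^ (1 - 2 * (N : ℤ))) (2 * N)
  have hprod : ∏ k ∈ Finset.range (2 * N), (1 + z * q ^ (1 - 2 * (N : ℤ)) * (q ^ 2) ^ k) =
     z ^ N * q ^ (-(N : ℤ) ^ 2) *
     ∏ i ∈ Finset.range N, ((1 + z * q ^ (2 * i + 1)) * (1 + z⁻¹ * q ^ (2 * i + 1))) := by
    rw [two_mul, Finset.prod_range_add, ← Finset.prod_range_reflect, Finset.prod_mul_distrib]
    have h1 : ∀ i ∈ Finset.range N, (1 + z * q ^ (1 - 2 * (N : ℤ)) * (q ^ 2) ^ (N + i)) =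
       1 + z * q ^ (2 * i + 1) := by
      intro i _
      have : q ^ (1 - 2 * (N : ℤ)) * (q ^ 2) ^ (N + i) = q ^ (2 * i + 1) := by
        rw [← pow_mul, ← zpow_natCast, ← zpow_natCast, ← zpow_add₀ hq']
        congr 1; push_cast; ring
      rw [mul_assoc, this]
    have h2 : ∀ i ∈ Finset.range N, (1 + z * q ^ (1 - 2 * (N : ℤ)) * (q ^ 2) ^ (N - 1 - i)) =
       (z * q ^ (-(2 * i + 1) : ℤ)) * (1 + z⁻¹ * q ^ (2 * i + 1)) := by
      intro i hi
      have hi := Finset.mem_range.1 hi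
      have h3 : q ^ (1 - 2 * (N : ℤ)) * (q ^ 2) ^ (N - 1 - i) = q ^ (-(2 * i + 1) : ℤ) := by
        rw [← pow_mul, ← zpow_natCast, ← zpow_add₀ hq']
        congr 1
        have : ((2 * (N - 1 - i) : ℕ) : ℤ) = 2 * (N - 1 - i) := by omega
        rw [this]; ring
      have h4 : q ^ (-(2 * i + 1) : ℤ) * q ^ (2 * i + 1) = 1 := by
        rw [← zpow_natCast, ← zpow_add₀ hq']
        have : (-(2 * i + 1) + (2 * i + 1 : ℕ) : ℤ) = 0 := by push_cast; ring
        rw [this, zpow_zero]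
      rw [mul_assoc, h3]
      field_simp
      linear_combination -h4
    rw [Finset.prod_congr rfl h1, Finset.prod_congr rfl h2, Finset.prod_mul_distrib]
    have h5 : ∏ i ∈ Finset.range N, (z * q ^ (-(2 * i + 1) : ℤ)) = z ^ N * q ^ (-(N : ℤ) ^ 2) := by
      clear hb h1 h2
      induction N with
      | zero => simp
      | succ N ih =>
        rw [Finset.prod_range_succ, ih]
        have : q ^ (-((N + 1 : ℕ) : ℤ) ^ 2) = q ^ (-(N : ℤ) ^ 2) * q ^ (-(2 * N + 1) : ℤ) := by
          rw [← zpow_add₀ hq']; congr 1; push_cast; ring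
        rw [this]; ring
    rw [h5]; ring
  rw [hprod] at hb
  have hc : z ^ N * q ^ (-(N : ℤ) ^ 2) ≠ 0 := by positivity
  apply mul_left_cancel₀ hc
  rw [hb, Finset.mul_sum]
  refine Finset.sum_congr rfl fun j _ => ?_
  have h6 : (q ^ 2) ^ (j.choose 2) * (q ^ (1 - 2 * (N : ℤ))) ^ j =
      q ^ (-(N : ℤ) ^ 2) * q ^ (((j : ℤ) - N) ^ 2) := by
    rw [← pow_mul, ← zpow_natCast, ← zpow_natCast, ← zpow_mul, ← zpow_add₀ hq', ← zpow_add₀ hq']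
    congr 1
    have : (2 * j.choose 2 : ℤ) = j * (j - 1) := by
      clear * -
      induction j with
      | zero => simp
      | succ j ih => 
        rw [Nat.choose_succ_succ']; push_cast; simp; linear_combination ih
    push_cast
    rw [this]; ring
  have h7 : z ^ j = z ^ N * z ^ ((j : ℤ) - N) := by
    rw [← zpow_natCast, ← zpow_natCast, ← zpow_add₀ hz]; congr 1; ring
  rw [mul_pow, h7]
  linear_combination gb (q ^ 2) (2 * N) j * z ^ N * z ^ ((j : ℤ) - N) * h6

open Filter Topology in
lemma jtp (q z : ℝ) (hq : 0 < q) (hq1 : q < 1) (hz : z ≠ 0)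
    (hs : Summable fun n : ℤ => z ^ n * q ^ (n ^ 2)) :
    Tendsto (fun N => ∏ i ∈ Finset.range N, ((1 - q ^ (2 * i + 2)) *
      (1 + z * q ^ (2 * i + 1)) * (1 + z⁻¹ * q ^ (2 * i + 1)))) atTop
      (𝓝 (∑' n : ℤ, z ^ n * q ^ (n ^ 2))) := by
  have h0 : 0 < q ^ 2 := by positivity
  have h1 : q ^ 2 < 1 := pow_lt_one₀ hq.le hq1 (by norm_num)
  set L := eF (q ^ 2) with hL
  have hLpos : 0 < L := eF_pos h0 h1
  let F : ℕ → ℤ → ℝ := fun N n =>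
    if n ∈ Finset.Icc (-(N : ℤ)) N then gb (q ^ 2) (2 * N) (n + N).toNat * (z ^ n * q ^ (n ^ 2)) else 0
  have hgb : ∀ (N : ℕ) (n : ℤ), n ∈ Finset.Icc (-(N : ℤ)) N → gb (q ^ 2) (2 * N) (n + N).toNat =
      eN (q ^ 2) (2 * N) / (eN (q ^ 2) (n + N).toNat * eN (q ^ 2) (N - n).toNat) := by
    intro N n hn
    rw [Finset.mem_Icc] at hn
    have := gb_closed (q ^ 2) (2 * N) (n + N).toNat (N - n).toNat (by omega)
    rw [← this]
    have h2 := (eN_pos h0 h1 (n + N).toNat).ne'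
    have h3 := (eN_pos h0 h1 (N - n).toNat).ne'
    field_simp
  have hF : ∀ N, ∏ i ∈ Finset.range N, ((1 + z * q ^ (2 * i + 1)) * (1 + z⁻¹ * q ^ (2 * i + 1))) =
      ∑' n, F N n := by
    intro N
    rw [finite_jtp q z hq hz N, tsum_eq_sum (s := Finset.Icc (-(N : ℤ)) N)
      (fun b hb => by simp only [F, if_neg hb])]
    refine Finset.sum_bij (fun j _ => (j : ℤ) - N) ?_ ?_ ?_ ?_
    · intro j hj; have := Finset.mem_range.1 hj; rw [Finset.mem_Icc]; omega
    · intro a _ b _ h; omega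
    · intro b hb
      rw [Finset.mem_Icc] at hb
      exact ⟨(b + N).toNat, by rw [Finset.mem_range]; omega, by omega⟩
    · intro j hj
      have hj := Finset.mem_range.1 hj
      have : ((j : ℤ) - N) ∈ Finset.Icc (-(N : ℤ)) N := by rw [Finset.mem_Icc]; omega
      simp only [F, if_pos this]
      simp
  have hlim : Tendsto (fun N => ∑' n, F N n) atTop (𝓝 (∑' n : ℤ, L⁻¹ * (z ^ n * q ^ (n ^ 2)))) := by
    refine tendsto_tsum_of_dominated_convergence
      (bound := fun n => (L * L)⁻¹ * ‖z ^ n * q ^ (n ^ 2)‖) (hs.norm.mul_left _) ?_ ?_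
    · intro n
      have hev : ∀ᶠ N : ℕ in atTop, F N n = eN (q ^ 2) (2 * N) /
          (eN (q ^ 2) (n + N).toNat * eN (q ^ 2) (N - n).toNat) * (z ^ n * q ^ (n ^ 2)) := by
        filter_upwards [eventually_ge_atTop n.natAbs] with N hN
        have : n ∈ Finset.Icc (-(N : ℤ)) N := by rw [Finset.mem_Icc]; omega
        simp only [F, if_pos this, hgb N n this]
      refine Tendsto.congr' (EventuallyEq.symm hev) ?_
      refine Tendsto.mul_const _ ?_
      have hE := eN_tendsto h0 h1
      have t1 : Tendsto (fun N : ℕ => 2 * N) atTop atTop :=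
        tendsto_atTop_mono (fun n => by simp only [id]; omega) tendsto_id
      have t2 : Tendsto (fun N : ℕ => (n + N).toNat) atTop atTop :=
        tendsto_atTop.2 fun b => by
          filter_upwards [eventually_ge_atTop (n.natAbs + b)] with N hN; omega
      have t3 : Tendsto (fun N : ℕ => (N - n).toNat) atTop atTop :=
        tendsto_atTop.2 fun b => by
          filter_upwards [eventually_ge_atTop (n.natAbs + b)] with N hN; omega
      have := (hE.comp t1).div ((hE.comp t2).mul (hE.comp t3)) (by positivity)
      have e : L⁻¹ = L / (L * L) := by field_simp
      rw [e]
      exact this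
    · refine Eventually.of_forall fun N n => ?_
      by_cases h : n ∈ Finset.Icc (-(N : ℤ)) N
      · simp only [F, if_pos h]
        rw [norm_mul]
        refine mul_le_mul_of_nonneg_right ?_ (norm_nonneg _)
        have p1 := eN_pos h0 h1 (n + N).toNat
        have p2 := eN_pos h0 h1 (N - n).toNat
        have p3 := eN_pos h0 h1 (2 * N)
        rw [hgb N n h, Real.norm_eq_abs, abs_of_pos (by positivity), inv_eq_one_div]
        have := eF_le h0 h1 (n + N).toNat
        have := eF_le h0 h1 (N - n).toNat
        have := eN_le_one h0 h1 (2 * N)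
        gcongr
      · simp only [F, if_neg h, norm_zero]
        positivity
  have hmul := (eN_tendsto h0 h1).mul hlim
  rw [tsum_mul_left, ← hL, mul_inv_cancel_left₀ hLpos.ne'] at hmul
  refine hmul.congr fun N => ?_
  rw [← hF, eN, ← Finset.prod_mul_distrib]
  refine Finset.prod_congr rfl fun i _ => ?_
  rw [← pow_mul, mul_assoc]
  congr 3

lemma exp_zpow' (u : ℝ) (n : ℤ) : Real.exp u ^ n = Real.exp (n * u) := by
  rw [← Real.rpow_intCast, ← Real.exp_mul, mul_comm]

lemma summ_quad (t u : ℝ) (ht : 0 < t) :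
    Summable fun n : ℤ => Real.exp (-t * (n : ℝ) ^ 2 + u * n) := by
  have h := HurwitzKernelBounds.summable_f_int 0 (-(u / (2 * t))) (t := t / Real.pi)
    (div_pos ht Real.pi_pos)
  have h2 := h.mul_left (Real.exp (u ^ 2 / (4 * t)))
  refine h2.congr fun n => ?_
  have hpi := Real.pi_ne_zero
  simp only [HurwitzKernelBounds.f_int, pow_zero, one_mul]
  rw [← Real.exp_add]
  congr 1
  field_simp
  ring

lemma summ_quad' (t u ε : ℝ) (ht : 0 < t) (hε : |ε| = 1) :
    Summable fun n : ℤ => ε ^ n * Real.exp (-t * (n : ℝ) ^ 2 + u * n) := by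
  refine Summable.of_norm ((summ_quad t u ht).congr fun n => ?_)
  rw [norm_mul, norm_zpow, Real.norm_eq_abs ε, hε, one_zpow, one_mul, Real.norm_eq_abs, Real.abs_exp]

open Filter Topology in
lemma jexp (t u ε : ℝ) (ht : 0 < t) (hε : ε = 1 ∨ ε = -1) :
    Tendsto (fun N => ∏ i ∈ Finset.range N, ((1 - Real.exp (-t) ^ (2 * i + 2)) *
      (1 + ε * Real.exp u * Real.exp (-t) ^ (2 * i + 1)) *
      (1 + ε * Real.exp (-u) * Real.exp (-t) ^ (2 * i + 1)))) atTop
      (𝓝 (∑' n : ℤ, ε ^ n * Real.exp (-t * (n : ℝ) ^ 2 + u * n))) := by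
  have habs : |ε| = 1 := by rcases hε with rfl | rfl <;> simp
  have hinv : ε⁻¹ = ε := by rcases hε with rfl | rfl <;> norm_num
  have h0 : ε ≠ 0 := by rcases hε with rfl | rfl <;> norm_num
  have e : (fun n : ℤ => (ε * Real.exp u) ^ n * Real.exp (-t) ^ (n ^ 2)) =
      fun n : ℤ => ε ^ n * Real.exp (-t * (n : ℝ) ^ 2 + u * n) := by
    funext n
    rw [mul_zpow, exp_zpow', exp_zpow', mul_assoc, ← Real.exp_add]
    congr 2
    push_cast; ring
  have := jtp (Real.exp (-t)) (ε * Real.exp u) (Real.exp_pos _)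
    (Real.exp_lt_one_iff.2 (by linarith)) (mul_ne_zero h0 (Real.exp_pos _).ne')
    (by rw [e]; exact summ_quad' t u ε ht habs)
  rw [e, mul_inv, hinv, ← Real.exp_neg] at this
  exact this

/-- Euler function of `e^{-t}` -/
noncomputable def ee (t : ℝ) : ℝ := eF (Real.exp (-t))

lemma ee_pos {t : ℝ} (ht : 0 < t) : 0 < ee t :=
  eF_pos (Real.exp_pos _) (Real.exp_lt_one_iff.2 (by linarith))

open Filter Topology in
lemma ee_tendsto {t : ℝ} (ht : 0 < t) (k m : ℕ) (hk : 0 < k) (hm : 0 < m) :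
    Tendsto (fun N => eN (Real.exp (-t) ^ k) (m * N)) atTop (𝓝 (ee (k * t))) := by
  have hk' : (0 : ℝ) < k := by exact_mod_cast hk
  have : Real.exp (-t) ^ k = Real.exp (-(k * t)) := by
    rw [← Real.exp_nat_mul]; congr 1; ring
  rw [this]
  have t1 : Tendsto (fun N : ℕ => m * N) atTop atTop :=
    tendsto_atTop_mono (fun n => by simp only [id]; nlinarith) tendsto_id
  exact (eN_tendsto (Real.exp_pos _) (Real.exp_lt_one_iff.2 (by have := mul_pos hk' ht; linarith))).comp t1

noncomputable def T4 (t : ℝ) : ℝ := ∑' n : ℤ, (-1 : ℝ) ^ n * Real.exp (-t * (n : ℝ) ^ 2)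
noncomputable def T3 (t : ℝ) : ℝ := ∑' n : ℤ, Real.exp (-t * (n : ℝ) ^ 2)
noncomputable def T2 (t : ℝ) : ℝ := ∑' n : ℤ, Real.exp (-t * ((n : ℝ) + 1 / 2) ^ 2)


lemma eN_mul (Q : ℝ) (m N : ℕ) :
    eN Q (m * N) = ∏ i ∈ Finset.range N, ∏ k ∈ Finset.range m, (1 - Q ^ (m * i + k + 1)) := by
  induction N with
  | zero => simp [eN_zero]
  | succ N ih => 
    rw [Finset.prod_range_succ, ← ih, eN, mul_add, mul_one, Finset.prod_range_add]; rfl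

lemma fin4 (q : ℝ) (N : ℕ) :
    (∏ i ∈ Finset.range N, ((1 - q ^ (2 * i + 2)) * (1 + -1 * 1 * q ^ (2 * i + 1)) *
      (1 + -1 * 1 * q ^ (2 * i + 1)))) * eN (q ^ 2) (1 * N) = eN (q ^ 1) (2 * N) ^ 2 := by
  simp only [eN_mul, ← Finset.prod_pow, ← Finset.prod_mul_distrib]
  refine Finset.prod_congr rfl fun i _ => ?_
  simp only [Finset.prod_range_succ, Finset.prod_range_zero]
  ring

lemma fin3 (q : ℝ) (N : ℕ) :
    (∏ i ∈ Finset.range N, ((1 - q ^ (2 * i + 2)) * (1 + 1 * 1 * q ^ (2 * i + 1)) *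
      (1 + 1 * 1 * q ^ (2 * i + 1)))) * (eN (q ^ 1) (2 * N) ^ 2 * eN (q ^ 4) (1 * N) ^ 2) =
      eN (q ^ 2) (2 * N) ^ 2 * eN (q ^ 2) (1 * N) ^ 3 := by
  simp only [eN_mul, ← Finset.prod_pow, ← Finset.prod_mul_distrib]
  refine Finset.prod_congr rfl fun i _ => ?_
  simp only [Finset.prod_range_succ, Finset.prod_range_zero]
  ring

lemma fin2 (q : ℝ) (hq : q ≠ 0) (N : ℕ) :
    (∏ i ∈ Finset.range N, ((1 - q ^ (2 * i + 2)) * (1 + 1 * q⁻¹ * q ^ (2 * i + 1)) *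
      (1 + 1 * q * q ^ (2 * i + 1)))) * (1 + q ^ (2 * N)) * eN (q ^ 2) (1 * N) =
      2 * eN (q ^ 4) (1 * N) ^ 2 := by
  have hr : ∀ i, q⁻¹ * q ^ (2 * i + 1) = q ^ (2 * i) := fun i => by field_simp; ring
  induction N with
  | zero => simp [eN_zero]; norm_num
  | succ N ih =>
    simp only [one_mul, hr] at ih ⊢
    simp only [Finset.prod_range_succ _ N, eN_succ, mul_pow]
    linear_combination (1 - q ^ (2 * N) * q ^ 2) ^ 2 *  (1 + q ^ (2 * N) * q ^ 2) ^ 2 * ih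

lemma fin5a (p : ℝ) (N : ℕ) :
    (∏ i ∈ Finset.range N, ((1 - p ^ (10 * i + 10)) * (1 - p ^ (10 * i + 1)) *
      (1 - p ^ (10 * i + 9)))) * (∏ i ∈ Finset.range N, ((1 - p ^ (10 * i + 10)) *
      (1 - p ^ (10 * i + 3)) * (1 - p ^ (10 * i + 7)))) *
      (eN (p ^ 2) (5 * N) * eN (p ^ 5) (2 * N)) = eN (p ^ 10) (1 * N) ^ 3 * eN (p ^ 1) (10 * N) := by
  simp only [eN_mul, ← Finset.prod_pow, ← Finset.prod_mul_distrib]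
  refine Finset.prod_congr rfl fun i _ => ?_
  simp only [Finset.prod_range_succ, Finset.prod_range_zero]
  have hp : ∀ a b c : ℕ, a * b = c → (p ^ a) ^ b = p ^ c := fun a b c h => by rw [← pow_mul, h]
  rw [hp 2 (5 * i + 0 + 1) (10 * i + 2) (by ring)]
  rw [hp 2 (5 * i + 1 + 1) (10 * i + 4) (by ring)]
  rw [hp 2 (5 * i + 2 + 1) (10 * i + 6) (by ring)]
  rw [hp 2 (5 * i + 3 + 1) (10 * i + 8) (by ring)]
  rw [hp 2 (5 * i + 4 + 1) (10 * i + 10) (by ring)]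
  rw [hp 5 (2 * i + 0 + 1) (10 * i + 5) (by ring)]
  rw [hp 5 (2 * i + 1 + 1) (10 * i + 10) (by ring)]
  rw [hp 10 (1 * i + 0 + 1) (10 * i + 10) (by ring)]
  rw [hp 1 (10 * i + 0 + 1) (10 * i + 1) (by ring)]
  rw [hp 1 (10 * i + 1 + 1) (10 * i + 2) (by ring)]
  rw [hp 1 (10 * i + 2 + 1) (10 * i + 3) (by ring)]
  rw [hp 1 (10 * i + 3 + 1) (10 * i + 4) (by ring)]
  rw [hp 1 (10 * i + 4 + 1) (10 * i + 5) (by ring)]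
  rw [hp 1 (10 * i + 5 + 1) (10 * i + 6) (by ring)]
  rw [hp 1 (10 * i + 6 + 1) (10 * i + 7) (by ring)]
  rw [hp 1 (10 * i + 7 + 1) (10 * i + 8) (by ring)]
  rw [hp 1 (10 * i + 8 + 1) (10 * i + 9) (by ring)]
  rw [hp 1 (10 * i + 9 + 1) (10 * i + 10) (by ring)]
  generalize (1 - p ^ (10 * i + 1)) = a1
  generalize (1 - p ^ (10 * i + 2)) = a2
  generalize (1 - p ^ (10 * i + 3)) = a3
  generalize (1 - p ^ (10 * i + 4)) = a4
  generalize (1 - p ^ (10 * i + 5)) = a5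
  generalize (1 - p ^ (10 * i + 6)) = a6
  generalize (1 - p ^ (10 * i + 7)) = a7
  generalize (1 - p ^ (10 * i + 8)) = a8
  generalize (1 - p ^ (10 * i + 9)) = a9
  generalize (1 - p ^ (10 * i + 10)) = a10
  ring

lemma fin5b (p : ℝ) (N : ℕ) :
    (∏ i ∈ Finset.range N, ((1 - p ^ (10 * i + 10)) * (1 + p ^ (10 * i + 2)) *
      (1 + p ^ (10 * i + 8)))) * (∏ i ∈ Finset.range N, ((1 - p ^ (10 * i + 10)) *
      (1 + p ^ (10 * i + 4)) * (1 + p ^ (10 * i + 6)))) *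
      (eN (p ^ 2) (5 * N) * eN (p ^ 20) (1 * N)) = eN (p ^ 10) (1 * N) ^ 3 * eN (p ^ 4) (5 * N) := by
  simp only [eN_mul, ← Finset.prod_pow, ← Finset.prod_mul_distrib]
  refine Finset.prod_congr rfl fun i _ => ?_
  simp only [Finset.prod_range_succ, Finset.prod_range_zero]
  have hp : ∀ a b c : ℕ, a * b = c → (p ^ a) ^ b = p ^ c := fun a b c h => by rw [← pow_mul, h]
  have hh : ∀ a b c : ℕ, a * b = c * 2 → 1 - (p ^ a) ^ b = (1 - p ^ c) * (1 + p ^ c) :=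
    fun a b c h => by rw [← pow_mul, h, pow_mul]; ring
  rw [hp 2 (5 * i + 0 + 1) (10 * i + 2) (by ring)]
  rw [hp 2 (5 * i + 1 + 1) (10 * i + 4) (by ring)]
  rw [hp 2 (5 * i + 2 + 1) (10 * i + 6) (by ring)]
  rw [hp 2 (5 * i + 3 + 1) (10 * i + 8) (by ring)]
  rw [hp 2 (5 * i + 4 + 1) (10 * i + 10) (by ring)]
  rw [hp 10 (1 * i + 0 + 1) (10 * i + 10) (by ring)]
  rw [hh 20 (1 * i + 0 + 1) (10 * i + 10) (by ring)]
  rw [hh 4 (5 * i + 0 + 1) (10 * i + 2) (by ring)]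
  rw [hh 4 (5 * i + 1 + 1) (10 * i + 4) (by ring)]
  rw [hh 4 (5 * i + 2 + 1) (10 * i + 6) (by ring)]
  rw [hh 4 (5 * i + 3 + 1) (10 * i + 8) (by ring)]
  rw [hh 4 (5 * i + 4 + 1) (10 * i + 10) (by ring)]
  generalize (1 - p ^ (10 * i + 2)) = a2
  generalize (1 + p ^ (10 * i + 2)) = b2
  generalize (1 - p ^ (10 * i + 4)) = a4
  generalize (1 + p ^ (10 * i + 4)) = b4
  generalize (1 - p ^ (10 * i + 6)) = a6
  generalize (1 + p ^ (10 * i + 6)) = b6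
  generalize (1 - p ^ (10 * i + 8)) = a8
  generalize (1 + p ^ (10 * i + 8)) = b8
  generalize (1 - p ^ (10 * i + 10)) = a10
  generalize (1 + p ^ (10 * i + 10)) = b10
  ring

open Filter Topology in
lemma T4_eq {t : ℝ} (ht : 0 < t) : T4 t * ee (2 * t) = ee t ^ 2 := by
  have h := jexp t 0 (-1) ht (Or.inr rfl)
  have e : (∑' n : ℤ, (-1 : ℝ) ^ n * Real.exp (-t * (n : ℝ) ^ 2 + 0 * n)) = T4 t := by
    simp [T4]
  rw [e] at h
  simp only [neg_zero, Real.exp_zero] at h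
  have h1 := ee_tendsto ht 2 1 (by norm_num) (by norm_num)
  have h2 := ee_tendsto ht 1 2 (by norm_num) (by norm_num)
  have := tendsto_nhds_unique (h.mul h1) ((h2.pow 2).congr fun N => (fin4 _ N).symm)
  simpa using this

open Filter Topology in
lemma T3_eq {t : ℝ} (ht : 0 < t) : T3 t * (ee t ^ 2 * ee (4 * t) ^ 2) = ee (2 * t) ^ 5 := by
  have h := jexp t 0 1 ht (Or.inl rfl)
  have e : (∑' n : ℤ, (1 : ℝ) ^ n * Real.exp (-t * (n : ℝ) ^ 2 + 0 * n)) = T3 t := by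
    simp [T3]
  rw [e] at h
  simp only [neg_zero, Real.exp_zero] at h
  have h1 := ee_tendsto ht 1 2 (by norm_num) (by norm_num)
  have h2 := ee_tendsto ht 4 1 (by norm_num) (by norm_num)
  have h3 := ee_tendsto ht 2 2 (by norm_num) (by norm_num)
  have h4 := ee_tendsto ht 2 1 (by norm_num) (by norm_num)
  have := tendsto_nhds_unique (h.mul ((h1.pow 2).mul (h2.pow 2)))
    (((h3.pow 2).mul (h4.pow 3)).congr fun N => (fin3 _ N).symm)
  rw [← pow_add] at this
  simpa using this

open Filter Topology in
lemma T2_eq {t : ℝ} (ht : 0 < t) :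
    T2 t * ee (2 * t) = 2 * Real.exp (-t / 4) * ee (4 * t) ^ 2 := by
  have h := jexp t t 1 ht (Or.inl rfl)
  have e : T2 t = Real.exp (-t / 4) *
     (∑' n : ℤ, (1 : ℝ) ^ n * Real.exp (-t * (n : ℝ) ^ 2 + (-t) * n)) := by
    rw [T2, ← tsum_mul_left]
    refine tsum_congr fun n => ?_
    rw [one_zpow, one_mul, ← Real.exp_add]; congr 1; ring
  have h := jexp t (-t) 1 ht (Or.inl rfl)
  rw [neg_neg] at h
  have hq : Real.exp t = (Real.exp (-t))⁻¹ := by rw [Real.exp_neg, inv_inv]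
  rw [hq] at h
  have h1 := ee_tendsto ht 2 1 (by norm_num) (by norm_num)
  have h2 := ee_tendsto ht 4 1 (by norm_num) (by norm_num)
  have h3 : Tendsto (fun N : ℕ => 1 + Real.exp (-t) ^ (2 * N)) atTop (𝓝 (1 + 0)) := by
    refine tendsto_const_nhds.add ?_
    have t1 : Tendsto (fun N : ℕ => 2 * N) atTop atTop :=
      tendsto_atTop_mono (fun n => by simp only [id]; omega) tendsto_id
    exact (tendsto_pow_atTop_nhds_zero_of_lt_one (Real.exp_pos _).le
      (Real.exp_lt_one_iff.2 (by linarith))).comp t1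
  have h4 : ∀ N, (∏ i ∈ Finset.range N, ((1 - Real.exp (-t) ^ (2 * i + 2)) *
      (1 + 1 * Real.exp (-t) * Real.exp (-t) ^ (2 * i + 1)) *
      (1 + 1 * (Real.exp (-t))⁻¹ * Real.exp (-t) ^ (2 * i + 1)))) *
      (1 + Real.exp (-t) ^ (2 * N)) * eN (Real.exp (-t) ^ 2) (1 * N) =
      2 * eN (Real.exp (-t) ^ 4) (1 * N) ^ 2 := by
    intro N
    rw [← fin2 _ (Real.exp_pos _).ne' N]
    congr 2
    refine Finset.prod_congr rfl fun i _ => ?_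
    ring
  have := tendsto_nhds_unique ((h.mul h3).mul h1)
    (((h2.pow 2).const_mul 2).congr fun N => (h4 N).symm)
  rw [e]
  push_cast at this
  linear_combination Real.exp (-t / 4) * this

lemma exps (t : ℝ) (k : ℕ) (r m : ℕ) (u : ℝ) (c : ℤ) (hu : u = -(c * t)) (h : c + k * r = m) :
    Real.exp u * Real.exp (-(k * t)) ^ r = Real.exp (-t) ^ m := by
  rw [← Real.exp_nat_mul, ← Real.exp_nat_mul, ← Real.exp_add, hu]
  congr 1
  have : (c : ℝ) + k * r = m := by exact_mod_cast h
  rw [← this]; ring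

lemma exps0 (t : ℝ) (k : ℕ) (r m : ℕ) (h : k * r = m) :
    Real.exp (-(k * t)) ^ r = Real.exp (-t) ^ m := by
  have := exps t k r m 0 0 (by simp) (by exact_mod_cast (by omega))
  simpa using this

/-- `∑ ε^n e^{-t(5n²+c n)}` -/
noncomputable def S5 (ε : ℝ) (c t : ℝ) : ℝ := 
  ∑' n : ℤ, ε ^ n * Real.exp (-(5 * t) * (n : ℝ) ^ 2 + -(c * t) * n)

open Filter Topology in
lemma S5_tendsto {t : ℝ} (ht : 0 < t) (ε : ℝ) (hε : ε = 1 ∨ ε = -1) (c : ℤ) (a b : ℕ)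
    (ha : c + 5 = a) (hb : -c + 5 = b) :
    Tendsto (fun N => ∏ i ∈ Finset.range N, ((1 - Real.exp (-t) ^ (10 * i + 10)) *
      (1 + ε * Real.exp (-t) ^ (10 * i + a)) *
      (1 + ε * Real.exp (-t) ^ (10 * i + b)))) atTop (𝓝 (S5 ε c t)) := by
  have h := jexp (5 * t) (-(c * t)) ε (by linarith) hε
  refine h.congr fun N => Finset.prod_congr rfl fun i _ => ?_
  have e1 := exps0 t 5 (2 * i + 2) (10 * i + 10) (by ring)
  have e2 := exps t 5 (2 * i + 1) (10 * i + a) (-(c * t)) c rfl (by push_cast; linarith)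
  have e3 := exps t 5 (2 * i + 1) (10 * i + b) (-(-(c * t))) (-c) (by push_cast; ring)
    (by push_cast; linarith)
  push_cast at e1 e2 e3
  rw [mul_assoc ε, mul_assoc ε, e1, e2, e3]

open Filter Topology in
lemma S5a {t : ℝ} (ht : 0 < t) : S5 (-1) 4 t * S5 (-1) 2 t * (ee (2 * t) * ee (5 * t)) =
    ee (10 * t) ^ 3 * ee t := by
  have a := S5_tendsto ht (-1) (Or.inr rfl) 4 9 1 (by norm_num) (by norm_num)
  have b := S5_tendsto ht (-1) (Or.inr rfl) 2 7 3 (by norm_num) (by norm_num)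
  have h1 := ee_tendsto ht 2 5 (by norm_num) (by norm_num)
  have h2 := ee_tendsto ht 5 2 (by norm_num) (by norm_num)
  have h3 := ee_tendsto ht 10 1 (by norm_num) (by norm_num)
  have h4 := ee_tendsto ht 1 10 (by norm_num) (by norm_num)
  have := tendsto_nhds_unique ((a.mul b).mul (h1.mul h2))
    (((h3.pow 3).mul h4).congr fun N => by
      rw [← fin5a]
      congr 2 <;> refine Finset.prod_congr rfl fun i _ => ?_ <;> ring)
  simpa using this

open Filter Topology in
lemma S5b {t : ℝ} (ht : 0 < t) : S5 1 (-3) t * S5 1 1 t * (ee (2 * t) * ee (20 * t)) =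
    ee (10 * t) ^ 3 * ee (4 * t) := by
  have a := S5_tendsto ht 1 (Or.inl rfl) (-3) 2 8 (by norm_num) (by norm_num)
  have b := S5_tendsto ht 1 (Or.inl rfl) 1 6 4 (by norm_num) (by norm_num)
  have h1 := ee_tendsto ht 2 5 (by norm_num) (by norm_num)
  have h2 := ee_tendsto ht 20 1 (by norm_num) (by norm_num)
  have h3 := ee_tendsto ht 10 1 (by norm_num) (by norm_num)
  have h4 := ee_tendsto ht 4 5 (by norm_num) (by norm_num)
  have := tendsto_nhds_unique ((a.mul b).mul (h1.mul h2))
    (((h3.pow 3).mul h4).congr fun N => by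
      rw [← fin5b]
      congr 2 <;> refine Finset.prod_congr rfl fun i _ => ?_ <;> ring)
  simpa using this

lemma summ_c (c : ℤ → ℝ) (hc : ∀ n, |c n| ≤ 1) {t : ℝ} (ht : 0 < t) :
    Summable fun n : ℤ => ‖c n * Real.exp (-t * (n : ℝ) ^ 2)‖ := by
  have h := summ_quad t 0 ht
  refine Summable.of_nonneg_of_le (fun n => norm_nonneg _) (fun n => ?_) h
  rw [norm_mul, Real.norm_eq_abs, Real.norm_eq_abs, Real.abs_exp]
  have : -t * (n : ℝ) ^ 2 + 0 * n = -t * (n : ℝ) ^ 2 := by ring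
  rw [this]
  exact mul_le_of_le_one_left (Real.exp_pos _).le (hc n)

/-- weighted theta -/
noncomputable def Tg (g : ℤ → ℝ) (t : ℝ) : ℝ := ∑' n : ℤ, g n * Real.exp (-t * (n : ℝ) ^ 2)

noncomputable def F5 (g : ℤ → ℝ) (t : ℝ) (p : ℤ × ℤ) : ℝ :=
  (g p.1 * Real.exp (-t * (p.1 : ℝ) ^ 2)) * (g p.2 * Real.exp (-t * (p.2 : ℝ) ^ 2))

noncomputable def I5 (g : ℤ → ℝ) (t : ℝ) (k : ℤ) : ℤ × ℤ → ℝ :=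
  Set.indicator {p | (5 : ℤ) ∣ p.1 + 2 * p.2 - k} (F5 g t)

section
variable (g : ℤ → ℝ) (hg : ∀ n, |g n| ≤ 1) (hp : ∀ n m : ℤ, (2 : ℤ) ∣ n - m → g n = g m)
  {t : ℝ} (ht : 0 < t)
include hg ht

lemma F5_summ : Summable (F5 g t) :=
  summable_mul_of_summable_norm (summ_c g hg ht) (summ_c g hg ht)

lemma F5_tsum : ∑' p, F5 g t p = Tg g t ^ 2 := by
  rw [sq]
  exact (tsum_mul_tsum_of_summable_norm (summ_c g hg ht) (summ_c g hg ht)).symm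

omit hg ht in
include hp in
lemma I5_rot (k l : ℤ) (h : (5 : ℤ) ∣ 3 * k - l) : ∑' p, I5 g t k p = ∑' p, I5 g t l p := by
  let e : ℤ × ℤ ≃ ℤ × ℤ := ⟨fun p => (-p.2, p.1), fun p => (p.2, -p.1), fun p => by simp,
    fun p => by simp⟩
  rw [← e.tsum_eq (I5 g t k)]
  refine tsum_congr fun p => ?_
  obtain ⟨c, d⟩ := p
  simp only [I5, Set.indicator, Set.mem_ofPred_eq, e, Equiv.coe_fn_mk]
  have h1 : (5 : ℤ) ∣ -d + 2 * c - k ↔ (5 : ℤ) ∣ c + 2 * d - l := by omega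
  simp only [h1]
  split_ifs
  · simp only [F5, Int.cast_neg, neg_sq]
    rw [hp (-d) d (by omega)]; ring
  · rfl

include hp in
lemma deg5 : Tg g t ^ 2 - Tg g (5 * t) ^ 2 =
    4 * ((∑' a : ℤ, g a * Real.exp (-t * (5 * (a : ℝ) ^ 2 + 4 * a))) *
      ∑' b : ℤ, g (b + 1) * Real.exp (-t * (5 * (b : ℝ) ^ 2 + 2 * b + 1))) := by
  have hF := F5_summ g hg ht
  have hI : ∀ k, Summable (I5 g t k) := fun k => hF.indicator _
  have hsplit : ∑' p, F5 g t p = (∑' p, I5 g t 0 p) + (∑' p, I5 g t 1 p) + (∑' p, I5 g t 2 p)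
      + (∑' p, I5 g t 3 p) + (∑' p, I5 g t 4 p) := by
    rw [← (hI 0).tsum_add (hI 1), ← ((hI 0).add (hI 1)).tsum_add (hI 2),
      ← (((hI 0).add (hI 1)).add (hI 2)).tsum_add (hI 3),
      ← ((((hI 0).add (hI 1)).add (hI 2)).add (hI 3)).tsum_add (hI 4)]
    refine tsum_congr fun p => ?_
    simp only [I5, Set.indicator, Set.mem_ofPred_eq]
    have : (p.1 + 2 * p.2) % 5 = 0 ∨ (p.1 + 2 * p.2) % 5 = 1 ∨ (p.1 + 2 * p.2) % 5 = 2 ∨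
      (p.1 + 2 * p.2) % 5 = 3 ∨ (p.1 + 2 * p.2) % 5 = 4 := by omega
    rcases this with h | h | h | h | h
    · rw [if_pos (by omega), if_neg (by omega), if_neg (by omega), if_neg (by omega),
        if_neg (by omega)]; ring
    · rw [if_neg (by omega), if_pos (by omega), if_neg (by omega), if_neg (by omega),
        if_neg (by omega)]; ring
    · rw [if_neg (by omega), if_neg (by omega), if_pos (by omega), if_neg (by omega),
        if_neg (by omega)]; ring
    · rw [if_neg (by omega), if_neg (by omega), if_neg (by omega), if_pos (by omega),
        if_neg (by omega)]; ring
    · rw [if_neg (by omega), if_neg (by omega), if_neg (by omega), if_neg (by omega),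
        if_pos (by omega)]; ring
  have h13 := I5_rot g hp (t := t) 1 3 (by norm_num)
  have h34 := I5_rot g hp (t := t) 3 4 (by norm_num)
  have h42 := I5_rot g hp (t := t) 4 2 (by norm_num)
  have h0 : ∑' p, I5 g t 0 p = Tg g (5 * t) ^ 2 := by
    rw [← F5_tsum g hg (by linarith : 0 < 5 * t)]
    have hinj : Function.Injective (fun p : ℤ × ℤ => (p.1 - 2 * p.2, 2 * p.1 + p.2)) := by
      rintro ⟨a, b⟩ ⟨c, d⟩ h
      simp only [Prod.mk.injEq] at h ⊢
      omega
    rw [← hinj.tsum_eq]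
    · refine tsum_congr fun p => ?_
      obtain ⟨x, y⟩ := p
      simp only [I5, Set.indicator, Set.mem_ofPred_eq]
      rw [if_pos (by omega)]
      simp only [F5]
      rw [hp (x - 2 * y) x (by omega), hp (2 * x + y) y (by omega)]
      have : Real.exp (-t * ((x - 2 * y : ℤ) : ℝ) ^ 2) * Real.exp (-t * ((2 * x + y : ℤ) : ℝ) ^ 2) =
          Real.exp (-(5 * t) * (x : ℝ) ^ 2) * Real.exp (-(5 * t) * (y : ℝ) ^ 2) := by
        rw [← Real.exp_add, ← Real.exp_add]; congr 1; push_cast; ring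
      linear_combination g x * g y * this
    · intro p hp'
      have : p ∈ {p : ℤ × ℤ | (5 : ℤ) ∣ p.1 + 2 * p.2 - 0} := by
        by_contra hcon
        exact hp' (Set.indicator_of_notMem hcon _)
      obtain ⟨x, hx⟩ := this
      refine ⟨(x, p.2 - 2 * x), ?_⟩
      ext <;> simp only <;> omega
  have h1 : ∑' p, I5 g t 1 p = (∑' a : ℤ, g a * Real.exp (-t * (5 * (a : ℝ) ^ 2 + 4 * a))) *
      ∑' b : ℤ, g (b + 1) * Real.exp (-t * (5 * (b : ℝ) ^ 2 + 2 * b + 1)) := by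
    have s1 : ∀ (c : ℤ → ℝ) (u v : ℝ), (∀ n, |c n| ≤ 1) →
        Summable fun n : ℤ => ‖c n * Real.exp (-t * (5 * (n : ℝ) ^ 2 + u * n + v))‖ := by
      intro c u v hc
      have h := (summ_quad (5 * t) (-t * u) (by linarith)).mul_left (Real.exp (-t * v))
      refine Summable.of_nonneg_of_le (fun n => norm_nonneg _) (fun n => ?_) h
      rw [norm_mul, Real.norm_eq_abs, Real.norm_eq_abs, Real.abs_exp]
      refine (mul_le_of_le_one_left (Real.exp_pos _).le (hc n)).trans (le_of_eq ?_)
      rw [← Real.exp_add]; congr 1; ring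
    have s2 := s1 g 4 0 hg
    simp only [add_zero] at s2
    have s3 := s1 (fun b => g (b + 1)) 2 1 (fun n => hg _)
    rw [tsum_mul_tsum_of_summable_norm s2 s3]
    have hinj : Function.Injective (fun p : ℤ × ℤ => (2 * p.1 + p.2 + 1, 2 * p.2 - p.1)) := by
      rintro ⟨a, b⟩ ⟨c, d⟩ h
      simp only [Prod.mk.injEq] at h ⊢
      omega
    rw [← hinj.tsum_eq]
    · refine tsum_congr fun p => ?_
      obtain ⟨x, y⟩ := p
      simp only [I5, Set.indicator, Set.mem_ofPred_eq]
      rw [if_pos (by omega)]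
      simp only [F5]
      rw [hp (2 * x + y + 1) (y + 1) (by omega), hp (2 * y - x) x (by omega)]
      have : Real.exp (-t * ((2 * x + y + 1 : ℤ) : ℝ) ^ 2) *
          Real.exp (-t * ((2 * y - x : ℤ) : ℝ) ^ 2) =
          Real.exp (-t * (5 * (x : ℝ) ^ 2 + 4 * x)) *
          Real.exp (-t * (5 * (y : ℝ) ^ 2 + 2 * y + 1)) := by
        rw [← Real.exp_add, ← Real.exp_add]; congr 1; push_cast; ring
      linear_combination g x * g (y + 1) * this
    · intro p hp'
      have : p ∈ {p : ℤ × ℤ | (5 : ℤ) ∣ p.1 + 2 * p.2 - 1} := by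
        by_contra hcon
        exact hp' (Set.indicator_of_notMem hcon _)
      obtain ⟨x, hx⟩ := this
      refine ⟨(2 * x - p.2, x), ?_⟩
      ext <;> simp only <;> omega
  rw [F5_tsum g hg ht, h0, ← h42, ← h34, ← h13, h1] at hsplit
  rw [hsplit]; ring
end

lemma zp_par (n m : ℤ) (h : (2 : ℤ) ∣ n - m) : (-1 : ℝ) ^ n = (-1) ^ m := by
  obtain ⟨k, hk⟩ := h
  have : n = m + 2 * k := by omega
  rw [this, zpow_add₀ (by norm_num), zpow_mul]; norm_num

lemma zp_abs (n : ℤ) : |(-1 : ℝ) ^ n| ≤ 1 := by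
  rw [abs_zpow]; simp

lemma D4 {t : ℝ} (ht : 0 < t) : (T4 t ^ 2 - T4 (5 * t) ^ 2) * (ee (2 * t) * ee (5 * t)) =
    -4 * Real.exp (-t) * (ee (10 * t) ^ 3 * ee t) := by
  have h := deg5 (fun n => (-1 : ℝ) ^ n) zp_abs zp_par ht
  have e1 : (∑' a : ℤ, (-1 : ℝ) ^ a * Real.exp (-t * (5 * (a : ℝ) ^ 2 + 4 * a))) = S5 (-1) 4 t := by
    unfold S5
    refine tsum_congr fun n => ?_
    congr 2; ring
  have e2 : (∑' b : ℤ, (-1 : ℝ) ^ (b + 1) * Real.exp (-t * (5 * (b : ℝ) ^ 2 + 2 * b + 1))) =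
      -Real.exp (-t) * S5 (-1) 2 t := by
    unfold S5
    rw [← tsum_mul_left]
    refine tsum_congr fun n => ?_
    rw [zpow_add_one₀ (by norm_num)]
    have : Real.exp (-t * (5 * (n : ℝ) ^ 2 + 2 * n + 1)) =
      Real.exp (-t) * Real.exp (-(5 * t) * (n : ℝ) ^ 2 + -(2 * t) * n) := by
      rw [← Real.exp_add]; congr 1; ring
    rw [this]; ring
  rw [e1, e2] at h
  have h' : T4 t ^ 2 - T4 (5 * t) ^ 2 = 4 * (S5 (-1) 4 t * (-Real.exp (-t) * S5 (-1) 2 t)) := h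
  rw [h']
  linear_combination (-4 * Real.exp (-t)) * S5a ht

noncomputable def godd (n : ℤ) : ℝ := if (2 : ℤ) ∣ n - 1 then 1 else 0

lemma godd_sum (h : ℤ → ℝ) (r : ℤ) (s : ℤ) (hr : (2 : ℤ) ∣ r + s - 1) :
    ∑' n : ℤ, godd (n + s) * h n = ∑' m : ℤ, h (2 * m + r) := by
  have hinj : Function.Injective (fun m : ℤ => 2 * m + r) := by
    intro a b hab; simp only at hab; omega
  rw [← hinj.tsum_eq]
  · refine tsum_congr fun m => ?_
    simp only [godd]
    rw [if_pos (by omega)]; ring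
  · intro n hn
    have : (2 : ℤ) ∣ n + s - 1 := by
      by_contra hc
      apply hn
      simp only [godd]
      rw [if_neg hc]; ring
    refine ⟨(n - r) / 2, ?_⟩
    simp only; omega

lemma Tg_odd (t : ℝ) : Tg godd t = T2 (4 * t) := by
  have := godd_sum (fun n => Real.exp (-t * (n : ℝ) ^ 2)) 1 0 (by norm_num)
  simp only [add_zero] at this
  unfold Tg T2
  rw [this]
  refine tsum_congr fun n => ?_
  congr 1; push_cast; ring

lemma D2 {t : ℝ} (ht : 0 < t) : (T2 t ^ 2 - T2 (5 * t) ^ 2) * (ee (2 * t) * ee (20 * t)) =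
    4 * Real.exp (-t / 2) * (ee (10 * t) ^ 3 * ee (4 * t)) := by
  have h := deg5 godd (fun n => by unfold godd; split_ifs <;> simp)
    (fun n m hnm => by
      unfold godd
      have : (2 : ℤ) ∣ n - 1 ↔ (2 : ℤ) ∣ m - 1 := by omega
      simp only [this]) (by linarith : 0 < t / 4)
  rw [Tg_odd, Tg_odd] at h
  have a1 := godd_sum (fun a => Real.exp (-(t / 4) * (5 * (a : ℝ) ^ 2 + 4 * a))) (-1) 0 (by norm_num)
  have a2 := godd_sum (fun b => Real.exp (-(t / 4) * (5 * (b : ℝ) ^ 2 + 2 * b + 1))) 0 1 (by norm_num)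
  simp only [add_zero] at a1
  rw [a1, a2] at h
  have e1 : (∑' m : ℤ, Real.exp (-(t / 4) * (5 * ((2 * m + -1 : ℤ) : ℝ) ^ 2 + 4 * ((2 * m + -1 : ℤ) : ℝ)))) =
      Real.exp (-t / 4) * S5 1 (-3) t := by
    unfold S5
    rw [← tsum_mul_left]
    refine tsum_congr fun n => ?_
    rw [one_zpow, one_mul, ← Real.exp_add]; congr 1; push_cast; ring
  have e2 : (∑' m : ℤ, Real.exp (-(t / 4) * (5 * ((2 * m + 0 : ℤ) : ℝ) ^ 2 + 2 * ((2 * m + 0 : ℤ) : ℝ) + 1))) =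
      Real.exp (-t / 4) * S5 1 1 t := by
    unfold S5
    rw [← tsum_mul_left]
    refine tsum_congr fun n => ?_
    rw [one_zpow, one_mul, ← Real.exp_add]; congr 1; push_cast; ring
  rw [e1, e2] at h
  have x1 : 4 * (t / 4) = t := by ring
  have x2 : 4 * (5 * (t / 4)) = 5 * t := by ring
  have x3 : Real.exp (-t / 4) * Real.exp (-t / 4) = Real.exp (-t / 2) := by
    rw [← Real.exp_add]; congr 1; ring
  rw [x1, x2] at h
  rw [h, ← x3]
  linear_combination (4 * Real.exp (-t / 4) * Real.exp (-t / 4)) * S5b ht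

lemma ind_sum (A : ℤ × ℤ → ℝ) (S : Set (ℤ × ℤ)) (f : ℤ × ℤ → ℤ × ℤ) (hf : Function.Injective f)
    (h1 : ∀ p, f p ∈ S) (h2 : ∀ p ∈ S, ∃ q, f q = p) :
    ∑' p, S.indicator A p = ∑' p, A (f p) := by
  rw [← hf.tsum_eq]
  · exact tsum_congr fun p => Set.indicator_of_mem (h1 p) _
  · intro p hp
    apply h2
    by_contra hc
    exact hp (Set.indicator_of_notMem hc _)

lemma two_split (A : ℤ × ℤ → ℝ) (hA : Summable A) (k : ℤ) :
    ∑' p, A p = ∑' p, Set.indicator {p | (2 : ℤ) ∣ p.1 + p.2} A p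
      + ∑' p, Set.indicator {p | (2 : ℤ) ∣ p.1 + p.2 - 1} A p := by
  rw [← (hA.indicator _).tsum_add (hA.indicator _)]
  refine tsum_congr fun p => ?_
  simp only [Set.indicator, Set.mem_ofPred_eq]
  rcases (by omega : (p.1 + p.2) % 2 = 0 ∨ (p.1 + p.2) % 2 = 1) with h | h
  · rw [if_pos (by omega), if_neg (by omega)]; ring
  · rw [if_neg (by omega), if_pos (by omega)]; ring

noncomputable def G2 (t s : ℝ) (p : ℤ × ℤ) : ℝ :=
  Real.exp (-t * (p.1 : ℝ) ^ 2) * Real.exp (-s * (p.2 : ℝ) ^ 2)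

lemma summ_one {t : ℝ} (ht : 0 < t) : Summable fun n : ℤ => ‖Real.exp (-t * (n : ℝ) ^ 2)‖ := by
  have := summ_c (fun _ => 1) (by simp) ht
  simpa using this

lemma summ_half {t : ℝ} (ht : 0 < t) :
    Summable fun n : ℤ => ‖Real.exp (-t * ((n : ℝ) + 1 / 2) ^ 2)‖ := by
  have h := (summ_quad t (-t) ht).mul_left (Real.exp (-t / 4))
  refine h.congr fun n => ?_
  rw [Real.norm_eq_abs, Real.abs_exp, ← Real.exp_add]; congr 1; ring

lemma G2_summ {t s : ℝ} (ht : 0 < t) (hs : 0 < s) : Summable (G2 t s) :=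
  summable_mul_of_summable_norm (summ_one ht) (summ_one hs)

lemma T3T3 {t s : ℝ} (ht : 0 < t) (hs : 0 < s) : T3 t * T3 s =
    ∑' p, Set.indicator {p | (2 : ℤ) ∣ p.1 + p.2} (G2 t s) p
      + ∑' p, Set.indicator {p | (2 : ℤ) ∣ p.1 + p.2 - 1} (G2 t s) p := by
  rw [← two_split _ (G2_summ ht hs) 0]
  exact tsum_mul_tsum_of_summable_norm (summ_one ht) (summ_one hs)

lemma T4T4 {t s : ℝ} (ht : 0 < t) (hs : 0 < s) : T4 t * T4 s =
    ∑' p, Set.indicator {p | (2 : ℤ) ∣ p.1 + p.2} (G2 t s) p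
      - ∑' p, Set.indicator {p | (2 : ℤ) ∣ p.1 + p.2 - 1} (G2 t s) p := by
  have hG := G2_summ ht hs
  rw [← (hG.indicator _).tsum_sub (hG.indicator _)]
  have := tsum_mul_tsum_of_summable_norm (summ_c (fun n => (-1 : ℝ) ^ n) zp_abs ht)
    (summ_c (fun n => (-1 : ℝ) ^ n) zp_abs hs)
  refine this.trans (tsum_congr fun p => ?_)
  have e : (-1 : ℝ) ^ p.1 * Real.exp (-t * (p.1 : ℝ) ^ 2) *
      ((-1 : ℝ) ^ p.2 * Real.exp (-s * (p.2 : ℝ) ^ 2)) = (-1 : ℝ) ^ (p.1 + p.2) * G2 t s p := by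
    rw [zpow_add₀ (by norm_num), G2]; ring
  rw [e]
  simp only [Set.indicator, Set.mem_ofPred_eq]
  rcases (by omega : (p.1 + p.2) % 2 = 0 ∨ (p.1 + p.2) % 2 = 1) with h | h
  · rw [if_pos (by omega), if_neg (by omega), zp_par _ 0 (by omega)]; simp
  · rw [if_neg (by omega), if_pos (by omega), zp_par _ 1 (by omega)]; simp

lemma ev_one {t : ℝ} (ht : 0 < t) :
    ∑' p, Set.indicator {p | (2 : ℤ) ∣ p.1 + p.2} (G2 t t) p = T3 (2 * t) ^ 2 := by
  rw [ind_sum _ _ (fun p => (p.1 + p.2, p.1 - p.2))]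
  · rw [sq]
    refine Eq.trans ?_ (tsum_mul_tsum_of_summable_norm (summ_one (by linarith : 0 < 2 * t))
      (summ_one (by linarith : 0 < 2 * t))).symm
    refine tsum_congr fun p => ?_
    simp only [G2]
    rw [← Real.exp_add, ← Real.exp_add]; congr 1; push_cast; ring
  · rintro ⟨a, b⟩ ⟨c, d⟩ h
    simp only [Prod.mk.injEq] at h ⊢
    omega
  · intro p; simp only [Set.mem_ofPred_eq]; omega
  · rintro ⟨a, b⟩ h
    simp only [Set.mem_ofPred_eq] at h
    refine ⟨((a + b) / 2, (a - b) / 2), ?_⟩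
    ext <;> simp only <;> omega

lemma od_one {t : ℝ} (ht : 0 < t) :
    ∑' p, Set.indicator {p | (2 : ℤ) ∣ p.1 + p.2 - 1} (G2 t t) p = T2 (2 * t) ^ 2 := by
  rw [ind_sum _ _ (fun p => (p.1 + p.2 + 1, p.1 - p.2))]
  · rw [sq]
    refine Eq.trans ?_ (tsum_mul_tsum_of_summable_norm (summ_half (by linarith : 0 < 2 * t))
      (summ_half (by linarith : 0 < 2 * t))).symm
    refine tsum_congr fun p => ?_
    simp only [G2]
    rw [← Real.exp_add, ← Real.exp_add]; congr 1; push_cast; ring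
  · rintro ⟨a, b⟩ ⟨c, d⟩ h
    simp only [Prod.mk.injEq] at h ⊢
    omega
  · intro p; simp only [Set.mem_ofPred_eq]; omega
  · rintro ⟨a, b⟩ h
    simp only [Set.mem_ofPred_eq] at h
    refine ⟨((a + b - 1) / 2, (a - b - 1) / 2), ?_⟩
    ext <;> simp only <;> omega

noncomputable def H2 (t s : ℝ) (p : ℤ × ℤ) : ℝ :=
  Real.exp (-t * ((p.1 : ℝ) + 1 / 2) ^ 2) * Real.exp (-s * ((p.2 : ℝ) + 1 / 2) ^ 2)

noncomputable def hf (t : ℝ) (n : ℤ) : ℝ := Real.exp (-t * ((n : ℝ) + 1 / 2) ^ 2)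

lemma H2_hf (t s : ℝ) : H2 t s = fun p => hf t p.1 * hf s p.2 := by
  funext p; simp only [H2, hf]

lemma hf_summ {t : ℝ} (ht : 0 < t) : Summable fun n : ℤ => ‖hf t n‖ := by
  simp only [hf]; exact summ_half ht

lemma H2_summ {t s : ℝ} (ht : 0 < t) (hs : 0 < s) : Summable (H2 t s) := by
  rw [H2_hf]
  exact summable_mul_of_summable_norm (hf_summ ht) (hf_summ hs)

lemma T2T2 {t s : ℝ} (ht : 0 < t) (hs : 0 < s) : T2 t * T2 s = ∑' p, H2 t s p := by
  rw [H2_hf, ← tsum_mul_tsum_of_summable_norm (hf_summ ht) (hf_summ hs)]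
  simp only [T2, hf]

lemma H2_swap (t s : ℝ) : ∑' p, Set.indicator {p | (2 : ℤ) ∣ p.1 + p.2 - 1} (H2 t s) p =
      ∑' p, Set.indicator {p | (2 : ℤ) ∣ p.1 + p.2} (H2 t s) p := by
  let e : ℤ × ℤ ≃ ℤ × ℤ := ⟨fun p => (p.1, -1 - p.2), fun p => (p.1, -1 - p.2), fun p => by simp,
    fun p => by simp⟩
  rw [← e.tsum_eq (Set.indicator {p | (2 : ℤ) ∣ p.1 + p.2 - 1} (H2 t s))]
  refine tsum_congr fun p => ?_
  simp only [Set.indicator, Set.mem_ofPred_eq, e, Equiv.coe_fn_mk]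
  have h1 : (2 : ℤ) ∣ p.1 + (-1 - p.2) - 1 ↔ (2 : ℤ) ∣ p.1 + p.2 := by omega
  simp only [h1]
  split_ifs
  · simp only [H2]
    rw [← Real.exp_add, ← Real.exp_add]; congr 1; push_cast; ring
  · rfl

lemma H2_even (t : ℝ) : ∑' p, Set.indicator {p | (2 : ℤ) ∣ p.1 + p.2} (H2 t (3 * t)) p =
      ∑' p : ℤ × ℤ, H2 t (3 * t) (p.2 + 2 * p.1, p.2) := by
  apply ind_sum _ _ (fun p => (p.2 + 2 * p.1, p.2))
  · rintro ⟨a, b⟩ ⟨c, d⟩ h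
    simp only [Prod.mk.injEq] at h ⊢
    omega
  · intro p; simp only [Set.mem_ofPred_eq]; omega
  · rintro ⟨a, b⟩ h
    simp only [Set.mem_ofPred_eq] at h
    refine ⟨((a - b) / 2, b), ?_⟩
    ext <;> simp only <;> omega

lemma G2_odd (t : ℝ) : ∑' p, Set.indicator {p | (2 : ℤ) ∣ p.1 + p.2 - 1} (G2 t (3 * t)) p =
      ∑' p : ℤ × ℤ, G2 t (3 * t) (-2 * p.2 - 1 - p.1, p.1) := by
  apply ind_sum _ _ (fun p => (-2 * p.2 - 1 - p.1, p.1))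
  · rintro ⟨a, b⟩ ⟨c, d⟩ h
    simp only [Prod.mk.injEq] at h ⊢
    omega
  · intro p; simp only [Set.mem_ofPred_eq]; omega
  · rintro ⟨a, b⟩ h
    simp only [Set.mem_ofPred_eq] at h
    refine ⟨(b, (-1 - b - a) / 2), ?_⟩
    ext <;> simp only <;> omega

lemma H2_G2 (t : ℝ) : ∑' p : ℤ × ℤ, H2 t (3 * t) (p.2 + 2 * p.1, p.2) =
    ∑' p : ℤ × ℤ, G2 t (3 * t) (-2 * p.2 - 1 - p.1, p.1) := by
  refine tsum_congr fun p => ?_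
  simp only [G2, H2]
  rw [← Real.exp_add, ← Real.exp_add]; congr 1; push_cast; ring

lemma deg3 {t : ℝ} (ht : 0 < t) : T3 t * T3 (3 * t) = T4 t * T4 (3 * t) + T2 t * T2 (3 * t) := by
  have h3 : 0 < 3 * t := by linarith
  have hH := H2_summ ht h3
  have e0 := T2T2 ht h3
  have e1 := two_split _ hH 0
  have e2 := H2_swap t (3 * t)
  have e3 := H2_even t
  have e4 := G2_odd t
  have e5 := H2_G2 t
  have e6 := T3T3 ht h3
  have e7 := T4T4 ht h3
  rw [e6, e7, e0, e1, e2, e3, e5, ← e4]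
  ring

lemma T2sq {t : ℝ} (ht : 0 < t) : T2 t ^ 2 = 2 * T2 (2 * t) * T3 (2 * t) := by
  have h1 := T2_eq ht
  have h2 := T2_eq (by linarith : 0 < 2 * t)
  have h3 := T3_eq (by linarith : 0 < 2 * t)
  have p2 := ee_pos (by linarith : 0 < 2 * t)
  have p4 := ee_pos (by linarith : 0 < 4 * t)
  have p8 := ee_pos (by linarith : 0 < 8 * t)
  rw [show 2 * (2 * t) = 4 * t by ring, show 4 * (2 * t) = 8 * t by ring] at h2 h3
  have x : Real.exp (-t / 4) * Real.exp (-t / 4) = Real.exp (-(2 * t) / 4) := by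
    rw [← Real.exp_add]; congr 1; ring
  rw [← eq_div_iff (by positivity)] at h1 h2 h3
  rw [h1, h2, h3, ← x]
  generalize ee (2 * t) = A at *
  generalize ee (4 * t) = B at *
  generalize ee (8 * t) = C at *
  field_simp

lemma quartic {t : ℝ} (ht : 0 < t) : T3 t ^ 4 = T4 t ^ 4 + T2 t ^ 4 := by
  have a := T3T3 ht ht
  have b := T4T4 ht ht
  rw [ev_one ht, od_one ht] at a b
  have c := T2sq ht
  have : T2 t ^ 4 = (T2 t ^ 2) ^ 2 := by ring
  rw [this, c]
  linear_combination (T3 t ^ 2 + T3 (2 * t) ^ 2 + T2 (2 * t) ^ 2) * a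
    - (T4 t ^ 2 + T3 (2 * t) ^ 2 - T2 (2 * t) ^ 2) * b

noncomputable def EE (t : ℝ) : ℝ := Real.exp (-Real.pi * t / 12) * ee (2 * Real.pi * t)

lemma EE_pos {t : ℝ} (ht : 0 < t) : 0 < EE t := by
  have := ee_pos (by positivity : 0 < 2 * Real.pi * t)
  unfold EE; positivity

lemma eT4 {t : ℝ} (ht : 0 < t) : T4 (Real.pi * t) = EE (t / 2) ^ 2 / EE t := by
  rw [eq_div_iff (EE_pos ht).ne']
  have h := T4_eq (by positivity : 0 < Real.pi * t)
  unfold EE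
  rw [show 2 * Real.pi * t = 2 * (Real.pi * t) by ring, show 2 * Real.pi * (t / 2) = Real.pi * t by ring]
  have x : Real.exp (-Real.pi * (t / 2) / 12) ^ 2 = Real.exp (-Real.pi * t / 12) := by
    rw [← Real.exp_nat_mul]; congr 1; push_cast; ring
  rw [mul_pow, x]
  linear_combination Real.exp (-Real.pi * t / 12) * h

lemma eT2 {t : ℝ} (ht : 0 < t) : T2 (Real.pi * t) = 2 * EE (2 * t) ^ 2 / EE t := by
  rw [eq_div_iff (EE_pos ht).ne']
  have h := T2_eq (by positivity : 0 < Real.pi * t)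
  unfold EE
  rw [show 2 * Real.pi * t = 2 * (Real.pi * t) by ring,
    show 2 * Real.pi * (2 * t) = 4 * (Real.pi * t) by ring]
  have x : Real.exp (-Real.pi * (2 * t) / 12) ^ 2 = Real.exp (-Real.pi * t / 12) *
      Real.exp (-(Real.pi * t) / 4) := by
    rw [← Real.exp_nat_mul, ← Real.exp_add]; congr 1; push_cast; ring
  rw [mul_pow, x]
  linear_combination Real.exp (-Real.pi * t / 12) * h

lemma eT3 {t : ℝ} (ht : 0 < t) :
    T3 (Real.pi * t) = EE t ^ 5 / (EE (t / 2) ^ 2 * EE (2 * t) ^ 2) := by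
  rw [eq_div_iff (mul_pos (pow_pos (EE_pos (by linarith)) _) (pow_pos (EE_pos (by linarith)) _)).ne']
  have h := T3_eq (by positivity : 0 < Real.pi * t)
  unfold EE
  rw [show 2 * Real.pi * t = 2 * (Real.pi * t) by ring,
    show 2 * Real.pi * (2 * t) = 4 * (Real.pi * t) by ring,
    show 2 * Real.pi * (t / 2) = Real.pi * t by ring]
  have x : Real.exp (-Real.pi * (2 * t) / 12) ^ 2 * Real.exp (-Real.pi * (t / 2) / 12) ^ 2
     = Real.exp (-Real.pi * t / 12) ^ 5 := by
    rw [← Real.exp_nat_mul, ← Real.exp_nat_mul, ← Real.exp_nat_mul, ← Real.exp_add]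
    congr 1; push_cast; ring
  simp only [mul_pow]
  rw [← x]
  linear_combination (Real.exp (-Real.pi * (2 * t) / 12) ^ 2 *
    Real.exp (-Real.pi * (t / 2) / 12) ^ 2) * h

lemma eD4 {t : ℝ} (ht : 0 < t) : (T4 (Real.pi * t) ^ 2 - T4 (Real.pi * (5 * t)) ^ 2) *
    (EE t * EE (5 * t / 2)) = -4 * (EE (5 * t) ^ 3 * EE (t / 2)) := by
  have h := D4 (by positivity : 0 < Real.pi * t)
  unfold EE
  rw [show 2 * Real.pi * t = 2 * (Real.pi * t) by ring,
    show 2 * Real.pi * (5 * t / 2) = 5 * (Real.pi * t) by ring,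
    show 2 * Real.pi * (5 * t) = 10 * (Real.pi * t) by ring,
    show 2 * Real.pi * (t / 2) = Real.pi * t by ring,
    show Real.pi * (5 * t) = 5 * (Real.pi * t) by ring]
  have x : Real.exp (-Real.pi * (5 * t) / 12) ^ 3 * Real.exp (-Real.pi * (t / 2) / 12)
     = Real.exp (-(Real.pi * t)) * (Real.exp (-Real.pi * t / 12) *
       Real.exp (-Real.pi * (5 * t / 2) / 12)) := by
    rw [← Real.exp_nat_mul, ← Real.exp_add, ← Real.exp_add, ← Real.exp_add]
    congr 1; push_cast; ring
  linear_combination (Real.exp (-Real.pi * t / 12) *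
       Real.exp (-Real.pi * (5 * t / 2) / 12)) * h +
       4 * (ee (10 * (Real.pi * t)) ^ 3 * ee (Real.pi * t)) * x

lemma eD2 {t : ℝ} (ht : 0 < t) : (T2 (Real.pi * t) ^ 2 - T2 (Real.pi * (5 * t)) ^ 2) *
    (EE t * EE (10 * t)) = 4 * (EE (5 * t) ^ 3 * EE (2 * t)) := by
  have h := D2 (by positivity : 0 < Real.pi * t)
  unfold EE
  rw [show 2 * Real.pi * t = 2 * (Real.pi * t) by ring,
    show 2 * Real.pi * (10 * t) = 20 * (Real.pi * t) by ring,
    show 2 * Real.pi * (5 * t) = 10 * (Real.pi * t) by ring,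
    show 2 * Real.pi * (2 * t) = 4 * (Real.pi * t) by ring,
    show Real.pi * (5 * t) = 5 * (Real.pi * t) by ring]
  have x : Real.exp (-Real.pi * (5 * t) / 12) ^ 3 * Real.exp (-Real.pi * (2 * t) / 12)
     = Real.exp (-(Real.pi * t) / 2) * (Real.exp (-Real.pi * t / 12) *
       Real.exp (-Real.pi * (10 * t) / 12)) := by
    rw [← Real.exp_nat_mul, ← Real.exp_add, ← Real.exp_add, ← Real.exp_add]
    congr 1; push_cast; ring
  linear_combination (Real.exp (-Real.pi * t / 12) *
       Real.exp (-Real.pi * (10 * t) / 12)) * h -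
       4 * (ee (10 * (Real.pi * t)) ^ 3 * ee (4 * (Real.pi * t))) * x

lemma dEta_eq {t : ℝ} (ht : 0 < t) : dedekindEta (I * t) = (EE t : ℂ) := by
  have hq0 : 0 < Real.exp (-(2 * Real.pi * t)) := Real.exp_pos _
  have hq1 : Real.exp (-(2 * Real.pi * t)) < 1 := by
    rw [Real.exp_lt_one_iff]
    have : 0 < 2 * Real.pi * t := by positivity
    linarith
  have hm : Multipliable fun n : ℕ => 1 + (-Real.exp (-(2 * Real.pi * t)) ^ (n + 1)) :=
    multipliable_one_add_of_summable (summ_aux hq0 hq1)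
  simp only [← sub_eq_add_neg] at hm
  have h2 := hm.map_tprod Complex.ofRealHom Complex.continuous_ofReal
  unfold dedekindEta EE ee eF
  rw [Complex.ofReal_mul]
  congr 1
  · rw [Complex.ofReal_exp]; congr 1; push_cast
    linear_combination (Real.pi * t / 12 : ℂ) * I_sq
  · refine Eq.trans ?_ h2.symm
    refine tprod_congr fun n => ?_
    simp only [Complex.ofRealHom_eq_coe]
    push_cast
    rw [← Complex.exp_nat_mul]
    congr 2
    push_cast
    linear_combination (2 * Real.pi * t * (n + 1) : ℂ) * I_sq

lemma dEta_eta (z : ℂ) : dedekindEta z = ModularForm.eta z := by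
  unfold dedekindEta ModularForm.eta
  congr 1
  · unfold Function.Periodic.qParam; congr 1; push_cast; ring
  · refine tprod_congr fun n => ?_
    rw [ModularForm.eta_q_eq_cexp]

lemma EE_inv {t : ℝ} (ht : 0 < t) : EE (1 / t) = Real.sqrt t * EE t := by
  have hz : (I * t) ∈ UpperHalfPlane.upperHalfPlaneSet := by
    change 0 < (I * (t : ℂ)).im
    simp [ht]
  have h := ModularForm.eta_comp_eq_csqrt_I_inv hz
  simp only [Function.comp, Pi.smul_apply, Pi.mul_apply, smul_eq_mul] at h
  have htc : (t : ℂ) ≠ 0 := by exact_mod_cast ht.ne'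
  have e : -1 / (I * t) = I * ((1 / t : ℝ) : ℂ) := by
    push_cast
    field_simp
    rw [I_sq]
  rw [e, ← dEta_eta, ← dEta_eta, dEta_eq ht, dEta_eq (by positivity)] at h
  have i12 : I ^ 12 = 1 := by
    rw [show (12 : ℕ) = 4 * 3 by norm_num, pow_mul, I_pow_four]; norm_num
  have hs : ∀ z : ℂ, z ≠ 0 → z.sqrt ^ 24 = z ^ 12 := fun z hz => by
    have e2 : cexp (Complex.log z / 2) ^ 2 = z := by
      rw [← Complex.exp_nat_mul]
      have : ((2 : ℕ) : ℂ) * (Complex.log z / 2) = Complex.log z := by push_cast; ring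
      rw [this, Complex.exp_log hz]
    rw [sqrt_eq_exp hz, show (24 : ℕ) = 2 * 12 by norm_num, pow_mul, e2]
  have h24 := congrArg (fun x => x ^ 24) h
  simp only [mul_pow, inv_pow] at h24
  rw [hs I I_ne_zero, hs _ (mul_ne_zero I_ne_zero htc)] at h24
  rw [i12, mul_pow, i12] at h24
  simp only [inv_one, one_mul] at h24
  have h25 : EE (1 / t) ^ 24 = t ^ 12 * EE t ^ 24 := by exact_mod_cast h24
  have h26 : EE (1 / t) ^ 24 = (Real.sqrt t * EE t) ^ 24 := by
    rw [h25, mul_pow, show (24 : ℕ) = 2 * 12 by norm_num, pow_mul (Real.sqrt t), Real.sq_sqrt ht.le]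
  have p1 := EE_pos (by positivity : 0 < 1 / t)
  have p2 := EE_pos ht
  exact (pow_left_inj₀ p1.le (by positivity) (by norm_num)).mp h26

lemma eN_mono (q Q : ℝ) (h0 : 0 < Q) (h1 : q < 1) (hQ : Q ≤ q) (N : ℕ) :
    eN q (2 * N) * eN (Q ^ 2) N ≤ eN Q (2 * N) * eN (q ^ 2) N := by
  have q0 : 0 < q := by linarith
  have Q1 : Q < 1 := by linarith
  have qq : q ^ 2 < 1 := by nlinarith
  have QQ : Q ^ 2 < 1 := by nlinarith
  induction N with
  | zero => simp [eN_zero]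
  | succ N ih =>
    rw [show 2 * (N + 1) = 2 * N + 1 + 1 by ring]
    simp only [eN_succ]
    have a1 := fac_pos q0 h1 (2 * N)
    have a2 := fac_pos q0 h1 (2 * N + 1)
    have a3 := fac_pos h0 Q1 (2 * N)
    have a4 := fac_pos h0 Q1 (2 * N + 1)
    have x1 : (q ^ 2) ^ (N + 1) = q ^ (2 * N + 1 + 1) := by rw [← pow_mul]; ring
    have x2 : (Q ^ 2) ^ (N + 1) = Q ^ (2 * N + 1 + 1) := by rw [← pow_mul]; ring
    rw [x1, x2]
    have x3 : Q ^ (2 * N + 1) ≤ q ^ (2 * N + 1) := pow_le_pow_left₀ h0.le hQ _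
    have b1 := eN_pos q0 h1 (2 * N)
    have b2 := eN_pos (by positivity) QQ N
    have b3 := eN_pos h0 Q1 (2 * N)
    have b4 := eN_pos (by positivity) qq N
    have := mul_le_mul ih (by linarith : 1 - q ^ (2 * N + 1) ≤ 1 - Q ^ (2 * N + 1)) a1.le (by positivity)
    have := mul_le_mul_of_nonneg_right this (by positivity :
      0 ≤ (1 - q ^ (2 * N + 1 + 1)) * (1 - Q ^ (2 * N + 1 + 1)))
    linarith

lemma EE_mono {t T : ℝ} (ht : 0 < t) (hT : t ≤ T) : EE t * EE (2 * T) ≤ EE T * EE (2 * t) := by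
  have hT0 : 0 < T := by linarith
  have h : ee (2 * Real.pi * t) * ee (2 * Real.pi * (2 * T)) ≤
      ee (2 * Real.pi * T) * ee (2 * Real.pi * (2 * t)) := by
    have p1 : 0 < 2 * Real.pi * t := by positivity
    have p2 : 0 < 2 * Real.pi * T := by positivity
    have l1 := ee_tendsto p1 1 2 (by norm_num) (by norm_num)
    have l2 := ee_tendsto p1 2 1 (by norm_num) (by norm_num)
    have l3 := ee_tendsto p2 1 2 (by norm_num) (by norm_num)
    have l4 := ee_tendsto p2 2 1 (by norm_num) (by norm_num)
    have := le_of_tendsto_of_tendsto' (l1.mul l4) (l3.mul l2) (fun N => by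
      simp only [pow_one, one_mul]
      apply eN_mono
      · positivity
      · rw [Real.exp_lt_one_iff]; linarith
      · apply Real.exp_le_exp.mpr
        have := mul_le_mul_of_nonneg_left hT (by positivity : 0 ≤ 2 * Real.pi)
        linarith)
    have y1 : 2 * Real.pi * (2 * T) = 2 * (2 * Real.pi * T) := by ring
    have y2 : 2 * Real.pi * (2 * t) = 2 * (2 * Real.pi * t) := by ring
    rw [y1, y2]
    simpa using this
  have hx : Real.exp (-Real.pi * t / 12) * Real.exp (-Real.pi * (2 * T) / 12) ≤
      Real.exp (-Real.pi * T / 12) * Real.exp (-Real.pi * (2 * t) / 12) := by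
    rw [← Real.exp_add, ← Real.exp_add]
    apply Real.exp_le_exp.mpr
    have := mul_le_mul_of_nonneg_left hT (by positivity : 0 ≤ Real.pi)
    linarith
  have q1 := ee_pos (by positivity : 0 < 2 * Real.pi * t)
  have q2 := ee_pos (by positivity : 0 < 2 * Real.pi * (2 * T))
  have := mul_le_mul hx h (by positivity) (by positivity)
  unfold EE
  linarith

lemma algA (s k b d u v : ℝ) (hs : 0 < s) (hb : 0 < b) (hd : 0 < d) (hu : 0 < u) (hv : 0 < v)
    (hk : k ^ 2 = 2) (hs2 : 30 * s ^ 2 = 1)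
    (h1 : (v ^ 4 * d ^ 2 * u ^ 2 - 4 * s * b ^ 2) * k = -4 * s * u ^ 5 * v * b ^ 2)
    (h2 : (4 * b ^ 2 - 6 * s * v ^ 4 * d ^ 2 * u ^ 2) * v = 24 * k * s * d ^ 2 * u) :
    8 * (u * v) * (u ^ 4 + v ^ 4) = k * (8 - (u * v) ^ 6) := by
  obtain ⟨r, hr⟩ : ∃ r, d ^ 2 = r * (s * b ^ 2) := ⟨d ^ 2 / (s * b ^ 2), by field_simp⟩
  rw [hr] at h1 h2
  have e1 : (v ^ 4 * r * u ^ 2 - 4) * k = -4 * u ^ 5 * v := by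
    have : (s * b ^ 2) * ((v ^ 4 * r * u ^ 2 - 4) * k) = (s * b ^ 2) * (-4 * u ^ 5 * v) := by
      linear_combination h1
    exact mul_left_cancel₀ (by positivity) this
  have e2 : (20 - v ^ 4 * r * u ^ 2) * v = 4 * k * r * u := by
    have : b ^ 2 * ((20 - v ^ 4 * r * u ^ 2) * v) = b ^ 2 * (4 * k * r * u) := by
      linear_combination 5 * h2 + (b ^ 2 * v ^ 5 * r * u ^ 2 + 4 * k * r * u * b ^ 2) * hs2
    exact mul_left_cancel₀ (by positivity) this
  have e3 : v ^ 4 * r * u ^ 2 = 4 - 2 * k * u ^ 5 * v := by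
    linear_combination (k / 2) * e1 + (- (v ^ 4 * r * u ^ 2) / 2 + 2) * hk
  linear_combination (u * v ^ 4 / 2) * e2 + (u * v ^ 5 / 2 + 2 * k) * e3 - (4 * u ^ 5 * v) * hk

lemma algD (p q U V X Y : ℝ) (hp : 0 < p) (hq : 0 < q) (hU : 0 < U) (hV : 0 < V)
    (hX : 0 < X) (hY : 0 < Y)
    (h1 : p * q * (p + q) = 4) (h2 : U * V = p ^ 4) (h3 : X * Y = q ^ 4)
    (h4 : X * U * (X + U) = 16) (h5 : Y * V * (Y + V) = 16) :
    U ^ 3 + V ^ 3 = p ^ 9 + 18 * p ^ 6 + 64 * p ^ 3 := by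
  have a1 : (X + U) * (Y + V) = (p + q) ^ 4 := by
    have : (p ^ 4 * q ^ 4) * ((X + U) * (Y + V)) = (p ^ 4 * q ^ 4) * (p + q) ^ 4 := by
      have e : (p * q * (p + q)) ^ 4 = 4 ^ 4 := by rw [h1]
      calc (p ^ 4 * q ^ 4) * ((X + U) * (Y + V)) = (X * U * (X + U)) * (Y * V * (Y + V)) := by
            rw [← h2, ← h3]; ring
        _ = 4 ^ 4 := by rw [h4, h5]; norm_num
        _ = _ := by rw [← e]; ring
    exact mul_left_cancel₀ (by positivity) this
  have a2 : p ^ 2 * ((2 * X + U) * (2 * Y + V)) = p ^ 6 + 32 * p ^ 3 + 64 := by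
    have : (2 * X + U) * (2 * Y + V) = 2 * q ^ 4 + 2 * (p + q) ^ 4 - p ^ 4 := by
      linear_combination 2 * h3 + 2 * a1 - h2
    rw [this]
    linear_combination (4 * (p * q * (p + q) + 4) + 8 * p ^ 3) * h1
  have a3 : U * (2 * X + U) ^ 2 = U ^ 3 + 64 := by linear_combination 4 * h4
  have a4 : V * (2 * Y + V) ^ 2 = V ^ 3 + 64 := by linear_combination 4 * h5
  have a5 : (p ^ 6 + 32 * p ^ 3 + 64) ^ 2 = (U ^ 3 + 64) * (V ^ 3 + 64) := by
    rw [← a2, ← a3, ← a4]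
    linear_combination -((2 * X + U) ^ 2 * (2 * Y + V) ^ 2) * h2
  have a6 : U ^ 3 * V ^ 3 = p ^ 12 := by rw [← mul_pow, h2]; ring
  linear_combination (-1 / 64) * a5 - (1 / 64) * a6

lemma algF (u v k : ℝ) (hu : 0 < u) (huv : u ≤ v) (hk : k ^ 2 = 2)
    (hA : 8 * (u * v) * (u ^ 4 + v ^ 4) = k * (8 - (u * v) ^ 6))
    (hD : u ^ 24 + v ^ 24 = (u * v) ^ 18 + 18 * (u * v) ^ 12 + 64 * (u * v) ^ 6) :
    (u / v) ^ 2 = (3 - Real.sqrt 5) / 2 := by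
  have hv : 0 < v := by linarith
  set P := u * v with hP
  have hP0 : 0 < P := by positivity
  obtain ⟨N, hN⟩ : ∃ N, u ^ 4 + v ^ 4 = N * P ^ 2 := ⟨(u ^ 4 + v ^ 4) / P ^ 2, by field_simp⟩
  have hN0 : 0 < N := by
    have : 0 < N * P ^ 2 := by rw [← hN]; positivity
    exact pos_of_mul_pos_left this (by positivity)
  have a1 : 32 * N ^ 2 * P ^ 6 = 64 - 16 * P ^ 6 + P ^ 12 := by
    have h : (8 * P * (u ^ 4 + v ^ 4)) ^ 2 = (k * (8 - P ^ 6)) ^ 2 := by rw [hA]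
    rw [hN, mul_pow, mul_pow k, hk] at h
    linear_combination h / 2
  have a2 : u ^ 24 + v ^ 24 = (N ^ 2 * (N ^ 2 - 3) ^ 2 - 2) * P ^ 12 := by
    have e : u ^ 4 * v ^ 4 = P ^ 4 := by rw [hP]; ring
    have e8 : u ^ 8 + v ^ 8 = (N ^ 2 - 2) * P ^ 4 := by
      have : (u ^ 4 + v ^ 4) ^ 2 = (N * P ^ 2) ^ 2 := by rw [hN]
      linear_combination this - 2 * e
    have e' : u ^ 8 * v ^ 8 = P ^ 8 := by rw [hP]; ring
    have : (u ^ 8 + v ^ 8) ^ 3 = ((N ^ 2 - 2) * P ^ 4) ^ 3 := by rw [e8]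
    linear_combination this - 3 * (u ^ 8 + v ^ 8) * e' - 3 * P ^ 8 * e8
  have a3 : (N ^ 2 - 9) * ((N ^ 2) ^ 2 + 3 * N ^ 2 + 4) = 0 := by
    have : P ^ 12 * ((N ^ 2 - 9) * ((N ^ 2) ^ 2 + 3 * N ^ 2 + 4)) = P ^ 12 * 0 := by
      linear_combination hD - a2 - P ^ 6 * a1
    exact mul_left_cancel₀ (by positivity) this
  have a4 : N = 3 := by
    rcases mul_eq_zero.mp a3 with h | h
    · nlinarith
    · nlinarith [sq_nonneg N, sq_nonneg (N ^ 2)]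
  rw [a4, hP] at hN
  set r := (u / v) ^ 2 with hr
  have hr1 : r ≤ 1 := by
    have : u / v ≤ 1 := (div_le_one hv).mpr huv
    exact pow_le_one₀ (by positivity) this
  have hq : r ^ 2 - 3 * r + 1 = 0 := by
    rw [hr]; field_simp; linear_combination hN
  have h5 : Real.sqrt 5 ^ 2 = 5 := Real.sq_sqrt (by norm_num)
  have h50 : 2 ≤ Real.sqrt 5 := Real.le_sqrt_of_sq_le (by norm_num)
  have : (r - (3 - Real.sqrt 5) / 2) * (r - (3 + Real.sqrt 5) / 2) = 0 := by
    linear_combination hq - h5 / 4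
  rcases mul_eq_zero.mp this with h | h
  · linarith
  · linarith

lemma main_real (s : ℝ) (hs : 0 < s) (hs2 : 30 * s ^ 2 = 1) :
    ((EE s / EE (2 * s)) / (EE (3 * s) / EE (6 * s))) ^ 2 = (3 - Real.sqrt 5) / 2 := by
  have ha := EE_pos hs
  have hb := EE_pos (by positivity : 0 < 2 * s)
  have hc := EE_pos (by positivity : 0 < 3 * s)
  have hd := EE_pos (by positivity : 0 < 6 * s)
  have he := EE_pos (by positivity : 0 < 4 * s)
  have hf' := EE_pos (by positivity : 0 < 12 * s)
  have hk : Real.sqrt 2 ^ 2 = 2 := Real.sq_sqrt (by norm_num)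
  have hk0 : 0 < Real.sqrt 2 := by positivity
  have hm : Real.sqrt s ^ 2 = s := Real.sq_sqrt hs.le
  have hm0 : 0 < Real.sqrt s := by positivity
  have hn : Real.sqrt 3 ^ 2 = 3 := Real.sq_sqrt (by norm_num)
  have hn0 : 0 < Real.sqrt 3 := by positivity
  have m30 : EE (30 * s) = Real.sqrt s * EE s := by
    rw [← EE_inv hs]; congr 1; field_simp; linear_combination hs2
  have m15 : EE (15 * s) = Real.sqrt 2 * Real.sqrt s * EE (2 * s) := by
    rw [← Real.sqrt_mul (by norm_num), ← EE_inv (by positivity)]; congr 1; field_simp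
    linear_combination hs2
  have m10 : EE (10 * s) = Real.sqrt 3 * Real.sqrt s * EE (3 * s) := by
    rw [← Real.sqrt_mul (by norm_num), ← EE_inv (by positivity)]; congr 1; field_simp
    linear_combination hs2
  have m5 : EE (5 * s) = Real.sqrt 2 * Real.sqrt 3 * Real.sqrt s * EE (6 * s) := by
    rw [← Real.sqrt_mul (by norm_num), ← Real.sqrt_mul (by norm_num),
      show (2 : ℝ) * 3 * s = 6 * s by norm_num, ← EE_inv (by positivity)]; congr 1; field_simp
    linear_combination hs2
  have d4 := eD4 (by positivity : 0 < 6 * s)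
  rw [eT4 (by positivity), eT4 (by positivity), show 6 * s / 2 = 3 * s by ring,
    show 5 * (6 * s) / 2 = 15 * s by ring, show 5 * (6 * s) = 30 * s by ring, m30, m15] at d4
  have d2 := eD2 hs
  rw [eT2 (by positivity), eT2 (by positivity), show 2 * (5 * s) = 10 * s by ring, m5, m10] at d2
  have d3 := deg3 (by positivity : 0 < Real.pi * (2 * s))
  rw [show 3 * (Real.pi * (2 * s)) = Real.pi * (6 * s) by ring, eT3 (by positivity),
    eT3 (by positivity), eT4 (by positivity), eT4 (by positivity), eT2 (by positivity),
    eT2 (by positivity), show 2 * s / 2 = s by ring, show 6 * s / 2 = 3 * s by ring,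
    show 2 * (2 * s) = 4 * s by ring, show 2 * (6 * s) = 12 * s by ring] at d3
  have q1 := quartic (by positivity : 0 < Real.pi * (2 * s))
  rw [eT3 (by positivity), eT4 (by positivity), eT2 (by positivity), show 2 * s / 2 = s by ring,
    show 2 * (2 * s) = 4 * s by ring] at q1
  have q2 := quartic (by positivity : 0 < Real.pi * (6 * s))
  rw [eT3 (by positivity), eT4 (by positivity), eT2 (by positivity),
    show 6 * s / 2 = 3 * s by ring, show 2 * (6 * s) = 12 * s by ring] at q2
  have mono := EE_mono hs (by linarith : s ≤ 3 * s)
  rw [show 2 * (3 * s) = 6 * s by ring] at mono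
  clear m30 m15 m10 m5
  generalize EE (2 * s) = b at *
  generalize EE (6 * s) = d at *
  obtain ⟨u, hu⟩ : ∃ u, EE s = u * b := ⟨EE s / b, by field_simp⟩
  obtain ⟨v, hv⟩ : ∃ v, EE (3 * s) = v * d := ⟨EE (3 * s) / d, by field_simp⟩
  obtain ⟨w, hw⟩ : ∃ w, EE (4 * s) = w * b := ⟨EE (4 * s) / b, by field_simp⟩
  obtain ⟨o, ho⟩ : ∃ o, EE (12 * s) = o * d := ⟨EE (12 * s) / d, by field_simp⟩
  rw [hu] at ha d4 d2 d3 q1 mono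
  rw [hv] at hc d4 d2 d3 q2 mono
  rw [hw] at he d3 q1
  rw [ho] at hf' d3 q2
  rw [hu, hv]
  have hu0 : 0 < u := pos_of_mul_pos_left ha hb.le
  have hv0 : 0 < v := pos_of_mul_pos_left hc hd.le
  have hw0 : 0 < w := pos_of_mul_pos_left he hb.le
  have ho0 : 0 < o := pos_of_mul_pos_left hf' hd.le
  have huv : u ≤ v := by
    have : (b * d) * u ≤ (b * d) * v := by linarith
    exact le_of_mul_le_mul_left this (by positivity)
  have x1 : (u * b) / b / (v * d / d) = u / v := by field_simp
  rw [x1]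
  generalize Real.sqrt s = m at *
  generalize Real.sqrt 2 = k at *
  generalize Real.sqrt 3 = n at *
  have g1 : (v ^ 4 * d ^ 2 * u ^ 2 - 4 * s * b ^ 2) * k = -4 * s * u ^ 5 * v * b ^ 2 := by
    have y1 : ((v * d) ^ 2 / d) ^ 2 = v ^ 4 * d ^ 2 := by field_simp
    have y2 : ((k * m * b) ^ 2 / (m * (u * b))) ^ 2 = 4 * s * b ^ 2 / u ^ 2 := by
      have : (k * m * b) ^ 2 / (m * (u * b)) = 2 * m * b / u := by
        rw [mul_pow, mul_pow, hk]; field_simp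
      rw [this, div_pow, mul_pow, mul_pow, hm]; ring
    rw [y1, y2] at d4
    have y3 : v ^ 4 * d ^ 2 - 4 * s * b ^ 2 / u ^ 2 =
      (v ^ 4 * d ^ 2 * u ^ 2 - 4 * s * b ^ 2) / u ^ 2 := by field_simp
    rw [y3, div_mul_eq_mul_div, div_eq_iff (by positivity)] at d4
    refine mul_left_cancel₀ (by positivity : d * m * b ≠ 0) ?_
    linear_combination d4 - 4 * m * u ^ 5 * b ^ 3 * v * d * hm
  have g2 : (4 * b ^ 2 - 6 * s * v ^ 4 * d ^ 2 * u ^ 2) * v = 24 * k * s * d ^ 2 * u := by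
    have y1 : (2 * b ^ 2 / (u * b)) ^ 2 = 4 * b ^ 2 / u ^ 2 := by field_simp; ring
    have y2 : (2 * (n * m * (v * d)) ^ 2 / (k * n * m * d)) ^ 2 = 6 * s * v ^ 4 * d ^ 2 := by
      have : 2 * (n * m * (v * d)) ^ 2 / (k * n * m * d) = k * n * m * v ^ 2 * d := by
        rw [div_eq_iff (by positivity)]
        linear_combination -(n * m * v * d) ^ 2 * hk
      rw [this]
      simp only [mul_pow, hk, hn, hm]; ring
    rw [y1, y2] at d2
    have y3 : 4 * b ^ 2 / u ^ 2 - 6 * s * v ^ 4 * d ^ 2 =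
      (4 * b ^ 2 - 6 * s * v ^ 4 * d ^ 2 * u ^ 2) / u ^ 2 := by field_simp
    rw [y3, div_mul_eq_mul_div, div_eq_iff (by positivity)] at d2
    have y4 : (k * n * m * d) ^ 3 = 6 * s * (k * n * m * d) * d ^ 2 := by
      calc (k * n * m * d) ^ 3 = k ^ 2 * n ^ 2 * m ^ 2 * (k * n * m * d) * d ^ 2 := by ring
        _ = _ := by rw [hk, hn, hm]; ring
    rw [y4] at d2
    refine mul_left_cancel₀ (by positivity : u * b * n * m * d ≠ 0) ?_
    linear_combination d2
  have g3 : (u * v) ^ 2 * (w * o) ^ 2 * ((u * v) ^ 2 + 4 * (w * o) ^ 2) = 1 := by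
    field_simp at d3
    linear_combination -d3
  have g4 : 1 = (u * w) ^ 8 * (u ^ 8 + 16 * w ^ 8) := by
    field_simp at q1
    linear_combination q1
  have g5 : 1 = (v * o) ^ 8 * (v ^ 8 + 16 * o ^ 8) := by
    field_simp at q2
    linear_combination q2
  refine algF u v k hu0 huv hk (algA s k b d u v hs hb hd hu0 hv0 hk hs2 g1 g2) ?_
  have := algD ((u * v) ^ 2) (4 * (w * o) ^ 2) (u ^ 8) (v ^ 8) (16 * w ^ 8) (16 * o ^ 8)
    (by positivity) (by positivity) (by positivity) (by positivity) (by positivity) (by positivity)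
    (by linear_combination 4 * g3) (by ring) (by ring) (by linear_combination -16 * g4)
    (by linear_combination -16 * g5)
  linear_combination this

theorem eta_quotient_evaluation :
    zEta (I / Real.sqrt 30) = ((161 : ℂ) - 72 * Real.sqrt 5) ∧
      (161 - 72 * Real.sqrt 5 : ℝ) = ((Real.sqrt 5 - 1) / 2) ^ 12 := by
  have h5 : Real.sqrt 5 ^ 2 = 5 := Real.sq_sqrt (by norm_num)
  have key : ((3 - Real.sqrt 5) / 2) ^ 6 = 161 - 72 * Real.sqrt 5 := by
    have h2 : ((3 - Real.sqrt 5) / 2) ^ 2 = (7 - 3 * Real.sqrt 5) / 2 := by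
      linear_combination h5 / 4
    rw [show (6 : ℕ) = 2 * 3 by norm_num, pow_mul, h2]
    linear_combination (-27 / 8 * Real.sqrt 5 + 189 / 8) * h5
  refine ⟨?_, ?_⟩
  · set s : ℝ := 1 / Real.sqrt 30 with hs
    have hs0 : 0 < s := by positivity
    have hs2 : 30 * s ^ 2 = 1 := by
      rw [hs, div_pow, Real.sq_sqrt (by norm_num)]; norm_num
    have h := main_real s hs0 hs2
    have e1 : I / (Real.sqrt 30 : ℂ) = I * (s : ℂ) := by
      rw [hs]; push_cast; ring
    have e6 : (6 : ℂ) * (I * (s : ℂ)) = I * ((6 * s : ℝ) : ℂ) := by push_cast; ring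
    have e2 : (2 : ℂ) * (I * (s : ℂ)) = I * ((2 * s : ℝ) : ℂ) := by push_cast; ring
    have e3 : (3 : ℂ) * (I * (s : ℂ)) = I * ((3 * s : ℝ) : ℂ) := by push_cast; ring
    unfold zEta
    rw [e1, e6, e2, e3, dEta_eq hs0, dEta_eq (by positivity), dEta_eq (by positivity),
      dEta_eq (by positivity)]
    have hr : (EE s * EE (6 * s) / (EE (2 * s) * EE (3 * s))) ^ 12 = 161 - 72 * Real.sqrt 5 := by
      have x : EE s * EE (6 * s) / (EE (2 * s) * EE (3 * s)) =
          (EE s / EE (2 * s)) / (EE (3 * s) / EE (6 * s)) := by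
        rw [div_div_div_eq]
      rw [x, show (12 : ℕ) = 2 * 6 by norm_num, pow_mul, h, key]
    exact_mod_cast hr
  · rw [← key, show (12 : ℕ) = 2 * 6 by norm_num, pow_mul]
    congr 1
    linear_combination -h5 / 4
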